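/- arXiv:1612.04790 — 2 statements merged into one kernel-verified Lean document; each statement's English description precedes it below -/
import Mathlib

section
/- Every 2-vertex-connected simple graph G with minimum degree at least 3 has an open ear-decomposition with exactly φ(G) even ears in which every short ear is pendant. -/
open SimpleGraph

variable {V : Type*}

/-- An *ear* of a graph `G`: a walk of length at least `1` whose two endpoints may
coincide, but all of whose other vertices are distinct (from each other and from the
endpoints); i.e. the walk is an (open) path, or a cycle when the endpoints coincide. -/
structure Ear (G : SimpleGraph V) where
  a : V
  b : V
  walk : G.Walk a b
  length_pos : 1 ≤ walk.length
  ear : (a ≠ b ∧ walk.IsPath) ∨ (∃ h : a = b, (walk.copy rfl h.symm).IsCycle)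

namespace Ear

variable {G : SimpleGraph V}

/-- The set of vertices of an ear. -/
def vertices (P : Ear G) : Set V := {v | v ∈ P.walk.support}

/-- The (set of) endpoints of an ear. -/
def endpoints (P : Ear G) : Set V := {P.a, P.b}

/-- The set `in(P)` of internal vertices of an ear. -/
def internal (P : Ear G) : Set V := P.vertices \ P.endpoints

/-- The internal vertices of an ear, as a `Finset`. -/
def internalFinset [DecidableEq V] (P : Ear G) : Finset V :=
  P.walk.support.toFinset \ {P.a, P.b}

/-- The list of edges of an ear. -/
def edges (P : Ear G) : List (Sym2 V) := P.walk.edges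

/-- A *trivial* ear has a single edge. -/
def IsTrivial (P : Ear G) : Prop := P.walk.length = 1

/-- A *short* ear has `2` or `3` edges. -/
def IsShort (P : Ear G) : Prop := P.walk.length = 2 ∨ P.walk.length = 3

/-- A *long* ear has at least `4` edges. -/
def IsLong (P : Ear G) : Prop := 4 ≤ P.walk.length

/-- An *open* ear has distinct endpoints. -/
def IsOpen (P : Ear G) : Prop := P.a ≠ P.b

end Ear

/-- The trivial ear corresponding to a single edge `wy` of `G`. -/
def trivialEar (G : SimpleGraph V) {w y : V} (h : G.Adj w y) : Ear G where
  a := w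
  b := y
  walk := SimpleGraph.Walk.cons h SimpleGraph.Walk.nil
  length_pos := by simp
  ear := Or.inl ⟨h.ne, by simp [h.ne]⟩

/-- The set of vertices appearing in the root or in the first `i` ears (those with
index `< i`) of a putative ear-decomposition. -/
def priorVerts {G : SimpleGraph V} (root : V) (ears : List (Ear G)) (i : ℕ) : Set V :=
  insert root {v | ∃ j : Fin ears.length, (j : ℕ) < i ∧ v ∈ (ears.get j).vertices}

/-- An *ear-decomposition* of `G`: a root vertex `P₀` together with a sequence of ears
`P₁, …, P_k` such that each ear shares exactly its endpoints with the set of vertices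
appearing earlier, and every edge of `G` lies in exactly one ear. -/
structure EarDecomp (G : SimpleGraph V) where
  root : V
  ears : List (Ear G)
  endpoints_sub : ∀ i : Fin ears.length,
    (ears.get i).endpoints ⊆ priorVerts root ears (i : ℕ)
  internal_new : ∀ i : Fin ears.length,
    (ears.get i).internal ∩ priorVerts root ears (i : ℕ) = ∅
  edge_cover : ∀ e ∈ G.edgeSet, ∃! i : Fin ears.length, e ∈ (ears.get i).edges

namespace EarDecomp

variable {G : SimpleGraph V}

/-- An ear-decomposition is *open* if every ear except the first one is open. -/
def IsOpen (D : EarDecomp G) : Prop :=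
  ∀ i : Fin D.ears.length, 1 ≤ (i : ℕ) → (D.ears.get i).IsOpen

/-- The number of even ears of an ear-decomposition. -/
def evenEars (D : EarDecomp G) : ℕ :=
  D.ears.countP fun P => decide (Even P.walk.length)

/-- The ear with index `i` is *pendant*: it is nontrivial, and no other nontrivial ear
has an endpoint among its internal vertices. -/
def IsPendant (D : EarDecomp G) (i : Fin D.ears.length) : Prop :=
  ¬ (D.ears.get i).IsTrivial ∧
  ∀ j : Fin D.ears.length, j ≠ i → ¬ (D.ears.get j).IsTrivial →
    (D.ears.get j).a ∉ (D.ears.get i).internal ∧ (D.ears.get j).b ∉ (D.ears.get i).internal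

/-- A *nice* ear-decomposition: open, all short ears are pendant, and no edge of `G`
connects internal vertices of two different short ears. -/
def IsNice (D : EarDecomp G) : Prop :=
  D.IsOpen ∧
  (∀ i : Fin D.ears.length, (D.ears.get i).IsShort → D.IsPendant i) ∧
  (∀ i j : Fin D.ears.length, i ≠ j → (D.ears.get i).IsShort → (D.ears.get j).IsShort →
    ∀ u ∈ (D.ears.get i).internal, ∀ v ∈ (D.ears.get j).internal, ¬ G.Adj u v)

/-- The number `π` of pendant ears of an ear-decomposition. -/
noncomputable def numPendant (D : EarDecomp G) : ℕ :=
  letI := Classical.decPred fun i : Fin D.ears.length => D.IsPendant i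
  (Finset.univ.filter fun i : Fin D.ears.length => D.IsPendant i).card

/-- The set `E'` of edges lying in nontrivial ears of an ear-decomposition. -/
noncomputable def nontrivialEdges [DecidableEq V] (D : EarDecomp G) : Finset (Sym2 V) :=
  letI := Classical.decPred fun i : Fin D.ears.length => ¬ (D.ears.get i).IsTrivial
  (Finset.univ.filter fun i : Fin D.ears.length => ¬ (D.ears.get i).IsTrivial).biUnion
    fun i => (D.ears.get i).edges.toFinset

/-- The eardrum `M` arising from the pendant short ears of an ear-decomposition: for each
pendant `2`-ear its internal vertex, and for each pendant `3`-ear the pair of its internal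
vertices (joined by an edge). -/
noncomputable def eardrum [DecidableEq V] (D : EarDecomp G) : Finset (Finset V) :=
  letI := Classical.decPred fun i : Fin D.ears.length =>
    (D.ears.get i).IsShort ∧ D.IsPendant i
  ((Finset.univ.filter fun i : Fin D.ears.length =>
      (D.ears.get i).IsShort ∧ D.IsPendant i).image
    fun i => (D.ears.get i).internalFinset)

/-- The set `V_I` of internal vertices of the non-pendant ears (including the root). -/
noncomputable def VI [DecidableEq V] (D : EarDecomp G) : Finset V :=
  letI := Classical.decPred fun i : Fin D.ears.length => D.IsPendant i
  insert D.root ((Finset.univ.filter fun i : Fin D.ears.length => ¬ D.IsPendant i).biUnion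
    fun i => (D.ears.get i).internalFinset)

end EarDecomp

/-- `φ(G)`: the minimum number of even ears over all ear-decompositions of `G`. -/
noncomputable def phi (G : SimpleGraph V) : ℕ :=
  sInf {n | ∃ D : EarDecomp G, D.evenEars = n}

/-- A graph is 2-vertex-connected if it has at least `3` vertices and deleting any single
vertex leaves a connected graph. -/
def TwoVertexConnected {W : Type*} (G : SimpleGraph W) : Prop :=
  3 ≤ Nat.card W ∧ ∀ v : W, (G.induce ({v}ᶜ : Set W)).Connected

/-- `OPT_2VC(G)`: the minimum number of edges of a 2-vertex-connected spanning subgraph. -/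
noncomputable def OPT2VC {W : Type*} (G : SimpleGraph W) : ℕ :=
  sInf {n | ∃ H : SimpleGraph W, H ≤ G ∧ TwoVertexConnected H ∧ H.edgeSet.ncard = n}

/-- An *eardrum* in `G`: a set of pairwise vertex-disjoint subgraphs, each consisting of a
single vertex or a single edge (encoded by their vertex sets). -/
def IsEardrum [DecidableEq V] (G : SimpleGraph V) (M : Finset (Finset V)) : Prop :=
  (∀ f ∈ M, (∃ v, f = {v}) ∨ (∃ u v, G.Adj u v ∧ f = {u, v})) ∧
  ∀ f ∈ M, ∀ g ∈ M, f ≠ g → Disjoint f g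

/-- `V(M)`: the set of vertices of the members of an eardrum. -/
def eardrumVerts (M : Finset (Finset V)) : Set V := {v | ∃ f ∈ M, v ∈ f}

/-- An *earmuff* for the eardrum `M`: a collection of paths `P_f`, for `f` in a subset
`F ⊆ M` (here given as a duplicate-free list of pairs `(f, P_f)`), such that each `P_f` is
a path whose set of internal vertices is exactly the vertex set of `f` (containing the
edge of `f` when `f` is an edge), whose two distinct endpoints lie outside `V(M)`, and
such that the union of all the paths is a forest. -/
structure Earmuff (G : SimpleGraph V) (M : Finset (Finset V)) where
  pairs : List (Finset V × Ear G)
  nodup_fst : (pairs.map Prod.fst).Nodup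
  mem_M : ∀ pr ∈ pairs, pr.1 ∈ M
  is_path : ∀ pr ∈ pairs, pr.2.a ≠ pr.2.b ∧ pr.2.walk.IsPath
  internal_eq : ∀ pr ∈ pairs, pr.2.internal = ↑pr.1
  edge_mem : ∀ pr ∈ pairs, ∀ u v : V, u ∈ pr.1 → v ∈ pr.1 → u ≠ v → s(u, v) ∈ pr.2.edges
  ends_outside : ∀ pr ∈ pairs, pr.2.a ∉ eardrumVerts M ∧ pr.2.b ∉ eardrumVerts M
  forest : (SimpleGraph.fromEdgeSet {e : Sym2 V | ∃ pr ∈ pairs, e ∈ pr.2.edges}).IsAcyclic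

/-- `µ(G, M)`: the maximum size of an earmuff for `M` in `G`. -/
noncomputable def mu (G : SimpleGraph V) (M : Finset (Finset V)) : ℕ :=
  sSup {n | ∃ em : Earmuff G M, em.pairs.length = n}

/-!
An ear-decomposition with `φ(G)` even ears is transformed without creating more even ears. The one
device used throughout is rerouting: a path that ends inside an ear `Q` is prolonged along one half
of `Q`, the other half becomes an ear of its own, and one of the two halves does this without
increasing the number of even ears.

Closed ears are opened first. A closed ear together with all later ears that hang on it alone forms
an island attached at a single vertex `v`; as `G - v` is connected, some path enters the island
away from `v`, and rerouting along it rebuilds the island by open ears. If the first cycle is a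
triangle, it is merged with the next ear.

Then consider a short ear that is not pendant. It can be merged with the first ear attached to it,
which decreases the number of nontrivial ears, unless it is a path `x u v y` and the attached ear
joins `x` to `v`. In that case the two contain a cycle through `x`, which starts an island attached
at `x`, and a path leaving `u`, which exists because `u` has a third neighbour, either allows a
merger after all or replaces the short ear by a long one. Short ears to which nothing is attached
are moved to the end. All edges left over are trivial ears, which are open and odd.
-/

/-- An ear (or a path) recorded by its two ends and the list of its inner vertices, without
reference to a graph. -/
structure Arc (V : Type*) where
  a : V
  inner : List V
  b : V

namespace Arc

/-- The same ear, traversed from `b` to `a`. -/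
def reverse (P : Arc V) : Arc V := ⟨P.b, P.inner.reverse, P.a⟩

/-- The set `in(P)` of inner vertices. -/
def innerSet (P : Arc V) : Set V := {w | w ∈ P.inner}

/-- All vertices added by a list of ears. -/
def innerVerts (L : List (Arc V)) : Set V := {w | ∃ P ∈ L, w ∈ P.inner}

/-- The number of even ears of `L`; an ear is even iff it has an odd number of inner vertices. -/
def numEven (L : List (Arc V)) : ℕ := (L.map fun P => P.inner.length % 2).sum

/-- An open nontrivial ear. -/
def IsProper (P : Arc V) : Prop := P.a ≠ P.b ∧ P.inner ≠ []

/-- `P` is a walk of `G` whose inner vertices are distinct and avoid `F`. -/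
structure IsLink (G : SimpleGraph V) (F : Set V) (P : Arc V) : Prop where
  isChain : List.IsChain G.Adj (P.a :: P.inner ++ [P.b])
  nodup : P.inner.Nodup
  notMem : ∀ w ∈ P.inner, w ∉ F

/-- `P` is an ear with ends in `S` and inner vertices outside `F`. Keeping the set `F` of
forbidden vertices separate from `S` allows ears to be attached to a part of the graph only. -/
structure IsEar (G : SimpleGraph V) (S F : Set V) (P : Arc V) : Prop extends IsLink G F P where
  a_mem : P.a ∈ S
  b_mem : P.b ∈ S
  two_le_of_closed : P.a = P.b → 2 ≤ P.inner.length

/-- The ears of the list can be added one after the other, starting from the vertex set `S` and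
avoiding `F`. -/
def IsEarSeq (G : SimpleGraph V) : Set V → Set V → List (Arc V) → Prop
  | _, _, [] => True
  | S, F, P :: L => IsEar G S F P ∧ IsEarSeq G (S ∪ P.innerSet) (F ∪ P.innerSet) L

/-- Starting from `S`, the vertex set `X` can be added by at most `n` open nontrivial ears, at most
`e` of them even, which avoid `F`. -/
def Buildable (G : SimpleGraph V) (S F X : Set V) (e n : ℕ) : Prop :=
  ∃ L, IsEarSeq G S F L ∧ (∀ Q ∈ L, Q.IsProper) ∧ innerVerts L = X ∧ numEven L ≤ e ∧ L.length ≤ n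

section Basic

variable {P Q : Arc V} {L L' : List (Arc V)} {w : V}

@[simp, grind =] lemma a_reverse : P.reverse.a = P.b := rfl

@[simp, grind =] lemma b_reverse : P.reverse.b = P.a := rfl

@[simp, grind =] lemma inner_reverse : P.reverse.inner = P.inner.reverse := rfl

@[simp, grind =] lemma mem_innerSet : w ∈ P.innerSet ↔ w ∈ P.inner := Iff.rfl

@[simp] lemma innerSet_reverse : P.reverse.innerSet = P.innerSet := by grind

@[simp, grind =] lemma innerVerts_nil : innerVerts ([] : List (Arc V)) = ∅ := by simp [innerVerts]

@[simp, grind =] lemma innerVerts_cons : innerVerts (P :: L) = P.innerSet ∪ innerVerts L := by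
  ext; simp [innerVerts]

@[simp, grind =] lemma innerVerts_append :
    innerVerts (L ++ L') = innerVerts L ∪ innerVerts L' := by
  induction L with
  | nil => simp
  | cons P L ih => simp [ih, Set.union_assoc]

@[simp, grind =] lemma numEven_nil : numEven ([] : List (Arc V)) = 0 := rfl

@[simp, grind =] lemma numEven_cons : numEven (P :: L) = P.inner.length % 2 + numEven L := by
  simp [numEven]

@[simp, grind =] lemma numEven_append : numEven (L ++ L') = numEven L + numEven L' := by
  simp [numEven]

lemma IsProper.reverse (h : P.IsProper) : P.reverse.IsProper :=
  ⟨h.1.symm, by simpa using h.2⟩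

end Basic

variable {G : SimpleGraph V} {S S' F F' X Y : Set V} {P Q M : Arc V} {L L₁ L₂ : List (Arc V)}

section Link

lemma IsLink.mono (h : IsLink G F P) (hF : F' ⊆ F) : IsLink G F' P :=
  ⟨h.isChain, h.nodup, fun w hw hw' => h.notMem w hw (hF hw')⟩

lemma IsLink.reverse (h : IsLink G F P) : IsLink G F P.reverse where
  isChain := by
    have h' : P.b :: P.inner.reverse ++ [P.a] = (P.a :: P.inner ++ [P.b]).reverse := by simp
    exact h' ▸ List.isChain_reverse.2 (h.isChain.imp fun _ _ h => G.adj_symm h)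
  nodup := List.nodup_reverse.2 h.nodup
  notMem w hw := h.notMem w (List.mem_reverse.1 hw)

lemma IsLink.append {p z q : V} {l m : List V} (h₁ : IsLink G F ⟨p, l, z⟩)
    (h₂ : IsLink G F ⟨z, m, q⟩) (hz : z ∉ F) (hd : (l ++ z :: m).Nodup) :
    IsLink G F ⟨p, l ++ z :: m, q⟩ where
  isChain := by
    have h' : p :: (l ++ z :: m) ++ [q] = (p :: l) ++ z :: (m ++ [q]) := by simp
    exact h' ▸ List.isChain_split.2 ⟨h₁.isChain, h₂.isChain⟩
  nodup := hd
  notMem := by grind [h₁.notMem, h₂.notMem]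

lemma IsLink.split {p z q : V} {l m : List V} (h : IsLink G F ⟨p, l ++ z :: m, q⟩) :
    IsLink G (F ∪ {w | w = z ∨ w ∈ m}) ⟨p, l, z⟩ ∧
      IsLink G (F ∪ {w | w = z ∨ w ∈ l}) ⟨z, m, q⟩ := by
  have h' : p :: (l ++ z :: m) ++ [q] = (p :: l) ++ z :: (m ++ [q]) := by simp
  obtain ⟨hl, hm⟩ := List.isChain_split.1 (h' ▸ h.isChain)
  have hnd := List.nodup_append.1 h.nodup
  have hF := h.notMem
  exact ⟨⟨hl, hnd.1, by grind⟩, ⟨hm, by grind, by grind⟩⟩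

end Link

section Seq

lemma IsEar.mono (h : IsEar G S F P) (hS : S ⊆ S') (hF : F' ⊆ F) : IsEar G S' F' P :=
  ⟨h.toIsLink.mono hF, hS h.a_mem, hS h.b_mem, h.two_le_of_closed⟩

lemma IsEar.reverse (h : IsEar G S F P) : IsEar G S F P.reverse :=
  ⟨h.toIsLink.reverse, h.b_mem, h.a_mem, fun e => by simpa using h.two_le_of_closed e.symm⟩

lemma IsLink.isEar (h : IsLink G F P) (ha : P.a ∈ S) (hb : P.b ∈ S) (hne : P.a ≠ P.b) :
    IsEar G S F P :=
  ⟨h, ha, hb, fun e => absurd e hne⟩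

lemma IsEarSeq.mono (h : IsEarSeq G S F L) (hS : S ⊆ S') (hF : F' ⊆ F) : IsEarSeq G S' F' L := by
  induction L generalizing S F S' F' with
  | nil => trivial
  | cons P L ih =>
    exact ⟨h.1.mono hS hF, ih h.2 (Set.union_subset_union_left _ hS)
      (Set.union_subset_union_left _ hF)⟩

lemma isEarSeq_append : IsEarSeq G S F (L₁ ++ L₂) ↔
    IsEarSeq G S F L₁ ∧ IsEarSeq G (S ∪ innerVerts L₁) (F ∪ innerVerts L₁) L₂ := by
  induction L₁ generalizing S F with
  | nil => simp [IsEarSeq]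
  | cons P L ih => simp only [List.cons_append, IsEarSeq, ih, innerVerts_cons, Set.union_assoc,
      and_assoc]

lemma isEarSeq_singleton : IsEarSeq G S F [P] ↔ IsEar G S F P := by simp [IsEarSeq]

lemma isEarSeq_concat : IsEarSeq G S F (L ++ [P]) ↔
    IsEarSeq G S F L ∧ IsEar G (S ∪ innerVerts L) (F ∪ innerVerts L) P := by
  rw [isEarSeq_append, isEarSeq_singleton]

lemma IsEarSeq.notMem (h : IsEarSeq G S F L) : ∀ w ∈ innerVerts L, w ∉ F := by
  induction L generalizing S F with
  | nil => simp
  | cons P L ih =>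
    have hP := h.1.notMem
    have hL := ih h.2
    grind

lemma IsEarSeq.ends_mem (h : IsEarSeq G S F L) (hQ : Q ∈ L) :
    Q.a ∈ S ∪ innerVerts L ∧ Q.b ∈ S ∪ innerVerts L := by
  induction L generalizing S F with
  | nil => simp at hQ
  | cons P L ih => grind [ih h.2, h.1.a_mem, h.1.b_mem]

lemma IsEarSeq.union_right (h : IsEarSeq G S F L) (hX : ∀ w ∈ innerVerts L, w ∉ X) :
    IsEarSeq G S (F ∪ X) L := by
  induction L generalizing S F with
  | nil => trivial
  | cons P L ih =>
    have hF := h.1.notMem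
    have hP : IsLink G (F ∪ X) P := ⟨h.1.isChain, h.1.nodup, by grind⟩
    refine ⟨⟨hP, h.1.a_mem, h.1.b_mem, h.1.two_le_of_closed⟩, ?_⟩
    exact (ih h.2 (by grind)).mono subset_rfl (by grind)

lemma IsEarSeq.of_ends_notMem (h : IsEarSeq G (S ∪ X) F L)
    (hX : ∀ Q ∈ L, Q.a ∉ X ∧ Q.b ∉ X) : IsEarSeq G S F L := by
  induction L generalizing S F with
  | nil => trivial
  | cons P L ih =>
    have hP : P.a ∈ S ∧ P.b ∈ S := by grind [h.1.a_mem, h.1.b_mem]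
    refine ⟨⟨h.1.toIsLink, hP.1, hP.2, h.1.two_le_of_closed⟩, ih (h.2.mono ?_ subset_rfl) ?_⟩ <;>
      grind

end Seq

section Buildable

variable {e e' n n' : ℕ}

lemma IsEarSeq.buildable (h : IsEarSeq G S F L) (hL : ∀ Q ∈ L, Q.IsProper) :
    Buildable G S F (innerVerts L) (numEven L) L.length :=
  ⟨L, h, hL, rfl, le_rfl, le_rfl⟩

lemma Buildable.mono (h : Buildable G S F X e n) (hS : S ⊆ S') (hF : F' ⊆ F) (hX : X = Y)
    (he : e ≤ e') (hn : n ≤ n') : Buildable G S' F' Y e' n' := by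
  obtain ⟨L, hL, hp, hLX, hLe, hLn⟩ := h
  exact ⟨L, hL.mono hS hF, hp, hLX.trans hX, hLe.trans he, hLn.trans hn⟩

lemma Buildable.append (h : Buildable G S F X e n)
    (h' : Buildable G (S ∪ X) (F ∪ X) Y e' n') :
    Buildable G S F (X ∪ Y) (e + e') (n + n') := by
  obtain ⟨L, hL, hp, rfl, hLe, hLn⟩ := h
  obtain ⟨L', hL', hp', rfl, hLe', hLn'⟩ := h'
  refine ⟨L ++ L', isEarSeq_append.2 ⟨hL, hL'⟩, by grind, by simp, ?_, ?_⟩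
  · rw [numEven_append]; omega
  · rw [List.length_append]; omega

lemma Buildable.empty : Buildable G S F ∅ 0 0 :=
  ⟨[], trivial, by simp, by simp, le_rfl, le_rfl⟩

/-- A trivial open ear is allowed here: it is simply left out. -/
lemma IsEar.buildable (h : IsEar G S F P) (hP : P.a ≠ P.b) :
    Buildable G S F P.innerSet (P.inner.length % 2) 1 := by
  by_cases hi : P.inner = []
  · have hX : ∅ = P.innerSet := by ext; simp [hi]
    exact Buildable.empty.mono subset_rfl subset_rfl hX (Nat.zero_le _) (Nat.zero_le _)
  · exact ⟨[P], isEarSeq_singleton.2 h, by simpa using ⟨hP, hi⟩, by simp, by simp, by simp⟩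

lemma Buildable.concat (h : Buildable G S F X e n) (hP : IsEar G (S ∪ X) (F ∪ X) P)
    (hne : P.a ≠ P.b) :
    Buildable G S F (X ∪ P.innerSet) (e + P.inner.length % 2) (n + 1) :=
  h.append (hP.buildable hne)

end Buildable

section Reroute

/-- `M` is a path ending in an inner vertex of the ear `Q`. It is prolonged along one half of `Q`
to the path `M'`, which ends in an end of `Q`; the other half of `Q` is `R`. -/
structure IsRerouting (G : SimpleGraph V) (F : Set V) (Q M M' R : Arc V) : Prop where
  a_eq : M'.a = M.a
  b_eq : R.b = M.b
  ends_eq : (R.a = Q.a ∧ M'.b = Q.b) ∨ (R.a = Q.b ∧ M'.b = Q.a)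
  isLink : IsLink G F M'
  isLink_rest : IsLink G (F ∪ M'.innerSet) R
  mem_iff : ∀ w, w ∈ M'.inner ∨ w ∈ R.inner ↔ w ∈ Q.inner ∨ w ∈ M.inner
  mem_inner : M.b ∈ M'.inner
  inner_subset : M.inner ⊆ M'.inner
  parity_le : M'.inner.length % 2 + R.inner.length % 2 ≤ Q.inner.length % 2 + M.inner.length % 2

lemma IsRerouting.of_reverse {M' R : Arc V} (h : IsRerouting G F Q.reverse M M' R) :
    IsRerouting G F Q M M' R := by
  obtain ⟨ha, hb, he, h₁, h₂, hu, hm, hs, hp⟩ := h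
  exact ⟨ha, hb, he.symm, h₁, h₂, by simpa using hu, hm, hs, by simpa using hp⟩

lemma isRerouting_of_inner_eq {z : V} {s t : List V} (hQ : IsLink G F Q) (hz : M.b = z)
    (hst : Q.inner = s ++ z :: t) (hM : IsLink G (F ∪ Q.innerSet) M)
    (hpar : (M.inner.length + 1 + t.length) % 2 + s.length % 2 ≤
      Q.inner.length % 2 + M.inner.length % 2) :
    IsRerouting G F Q M ⟨M.a, M.inner ++ z :: t, Q.b⟩ ⟨Q.a, s, z⟩ := by
  obtain ⟨a, q, b⟩ := Q
  subst hst hz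
  obtain ⟨h₁, h₂⟩ := hQ.split
  have hnd := hQ.nodup
  have hav := hM.notMem
  have hM' : IsLink G F ⟨M.a, M.inner, M.b⟩ := hM.mono Set.subset_union_left
  refine ⟨rfl, rfl, by simp, hM'.append (h₂.mono Set.subset_union_left) ?_ ?_, ?_, ?_, by simp,
    by simp, by simp only [List.length_append, List.length_cons] at hpar ⊢; omega⟩
  · exact hQ.notMem _ (by simp)
  · simp only [List.nodup_append, List.nodup_cons] at hnd ⊢
    grind [hM.nodup]
  · have hs := h₁.notMem
    exact ⟨h₁.isChain, h₁.nodup, by grind⟩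
  · grind

/-- Of the two halves of `Q`, prolonging along at least one does not increase the number of even
ears. -/
lemma IsLink.exists_isRerouting (hQ : IsLink G F Q) (hM : IsLink G (F ∪ Q.innerSet) M)
    (hz : M.b ∈ Q.inner) : ∃ M' R, IsRerouting G F Q M M' R := by
  obtain ⟨s, t, hst⟩ := List.append_of_mem hz
  have hlen : Q.inner.length = s.length + 1 + t.length := by simp [hst]; omega
  by_cases hpar : (M.inner.length + 1 + t.length) % 2 + s.length % 2 ≤
      Q.inner.length % 2 + M.inner.length % 2
  · exact ⟨_, _, isRerouting_of_inner_eq hQ rfl hst hM hpar⟩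
  · have hst' : Q.reverse.inner = t.reverse ++ M.b :: s.reverse := by simp [hst]
    refine ⟨_, _, (isRerouting_of_inner_eq hQ.reverse rfl hst' (by simpa using hM) ?_).of_reverse⟩
    simp only [inner_reverse, List.length_reverse]
    omega

end Reroute

section Absorb

variable {T : Set V} {D : List (Arc V)} {M' M'' R C : Arc V} {v : V}

/-- The path `M`, which may end in an inner vertex of the ears `D` attached to `T`, is prolonged to
the path `M'` ending in `T`, after which the rest of `D` can still be built. -/
structure IsAbsorption (G : SimpleGraph V) (T F : Set V) (D : List (Arc V)) (M M' : Arc V) :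
    Prop where
  a_eq : M'.a = M.a
  b_mem : M'.b ∈ T
  isLink : IsLink G F M'
  inner_subset : M.inner ⊆ M'.inner
  b_mem_or : M.b ∈ T ∨ M.b ∈ M'.inner
  exists_rest : ∃ X e, Buildable G (T ∪ M'.innerSet) (F ∪ M'.innerSet) X e D.length ∧
    (∀ w, w ∈ X ∨ w ∈ M'.inner ↔ w ∈ innerVerts D ∨ w ∈ M.inner) ∧
    e + M'.inner.length % 2 ≤ numEven D + M.inner.length % 2

lemma IsAbsorption.concat (h : IsAbsorption G T F D M M')
    (hQ : IsEar G (T ∪ innerVerts D) (F ∪ innerVerts D) Q) (hne : Q.a ≠ Q.b)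
    (hM : IsLink G (F ∪ innerVerts (D ++ [Q])) M) : IsAbsorption G T F (D ++ [Q]) M M' := by
  obtain ⟨X, e, hX, hu, he⟩ := h.exists_rest
  have hav := hM.notMem
  have hQav := hQ.notMem
  have hQ' : IsEar G (T ∪ M'.innerSet ∪ X) (F ∪ M'.innerSet ∪ X) Q :=
    ⟨⟨hQ.isChain, hQ.nodup, by grind⟩, by grind [hQ.a_mem], by grind [hQ.b_mem],
      hQ.two_le_of_closed⟩
  refine ⟨h.a_eq, h.b_mem, h.isLink, h.inner_subset, h.b_mem_or, _, _,
    (hX.concat hQ' hne).mono subset_rfl subset_rfl rfl le_rfl (by simp), by grind, by grind⟩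

lemma IsAbsorption.reroute (h : IsAbsorption G T F D M' M'') (hTF : T ⊆ F)
    (hQ : IsEar G (T ∪ innerVerts D) (F ∪ innerVerts D) Q)
    (hr : IsRerouting G (F ∪ innerVerts D) Q M M' R) (hb : M.b ∈ Q.inner) :
    IsAbsorption G T F (D ++ [Q]) M M'' := by
  obtain ⟨X, e, hX, hu, he⟩ := h.exists_rest
  have hu' := hr.mem_iff
  have hRav := hr.isLink_rest.notMem
  have hQav := hQ.notMem
  have hRa : R.a ∈ T ∪ innerVerts D := by grind [hr.ends_eq, hQ.a_mem, hQ.b_mem]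
  have hMb : M.b ∈ M''.inner := h.inner_subset hr.mem_inner
  have hne : R.a ≠ R.b := by grind [hr.b_eq]
  have hR : IsLink G (F ∪ M''.innerSet ∪ X) R :=
    ⟨hr.isLink_rest.isChain, hr.isLink_rest.nodup, by grind⟩
  have hR' : IsEar G (T ∪ M''.innerSet ∪ X) (F ∪ M''.innerSet ∪ X) R :=
    hR.isEar (by grind) (by grind [hr.b_eq]) hne
  refine ⟨h.a_eq.trans hr.a_eq, h.b_mem, h.isLink, List.Subset.trans hr.inner_subset h.inner_subset,
    Or.inr hMb, _, _, (hX.concat hR' hne).mono subset_rfl subset_rfl rfl le_rfl (by simp), by grind,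
    by grind [hr.parity_le]⟩

lemma IsEarSeq.exists_isAbsorption (hD : IsEarSeq G T F D) (hp : ∀ Q ∈ D, Q.IsProper)
    (hTF : T ⊆ F) (hM : IsLink G (F ∪ innerVerts D) M) (hb : M.b ∈ T ∪ innerVerts D) :
    ∃ M', IsAbsorption G T F D M M' := by
  induction D using List.reverseRecOn generalizing M with
  | nil =>
    exact ⟨M, rfl, by simpa using hb, by simpa using hM, List.Subset.refl _,
      by simpa using Or.inl hb, ∅, 0, .empty, by simp, by simp⟩
  | append_singleton D Q ih =>
    obtain ⟨hD, hQ⟩ := isEarSeq_concat.1 hD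
    by_cases hz : M.b ∈ Q.inner
    · obtain ⟨M₁, R, hr⟩ := hQ.toIsLink.exists_isRerouting (hM.mono (by grind)) hz
      obtain ⟨M', h⟩ := ih hD (by grind) hr.isLink (by grind [hr.ends_eq, hQ.a_mem, hQ.b_mem])
      exact ⟨M', h.reroute hTF hQ hr hz⟩
    · obtain ⟨M', h⟩ := ih hD (by grind) (hM.mono (by grind)) (by grind)
      exact ⟨M', h.concat hQ (hp Q (by simp)).1 hM⟩

lemma IsRerouting.buildable_of_closed (hr : IsRerouting G F C M M' R) (hC : IsEar G {v} F C)
    (hv : v ∈ F) (hav : M.a ≠ v) (hb : M.b ∈ C.inner) :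
    Buildable G {M.a, v} F (C.innerSet ∪ M.innerSet)
      (C.inner.length % 2 + M.inner.length % 2) 2 := by
  have hb' := hC.notMem _ hb
  have hCa : C.a = v := hC.a_mem
  have hCb : C.b = v := hC.b_mem
  have hends := hr.ends_eq
  have hne : M'.a ≠ M'.b := by grind [hr.a_eq]
  have hM' : IsEar G {M.a, v} F M' := hr.isLink.isEar (by grind [hr.a_eq]) (by grind) hne
  have hne' : R.a ≠ R.b := by grind [hr.b_eq]
  have hR : IsEar G ({M.a, v} ∪ M'.innerSet) (F ∪ M'.innerSet) R :=
    hr.isLink_rest.isEar (by grind) (by grind [hr.b_eq, hr.mem_inner]) hne'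
  have hu := hr.mem_iff
  exact ((hM'.buildable hne).concat hR hne').mono subset_rfl subset_rfl (by grind) hr.parity_le
    le_rfl

lemma Buildable.concat_of_isLink {e n : ℕ} (h : Buildable G S F (X ∪ M.innerSet) e n)
    (hQ : IsEar G (T ∪ X) (F ∪ X) Q) (hne : Q.a ≠ Q.b) (hTS : T ⊆ S)
    (hM : IsLink G (F ∪ X ∪ Q.innerSet) M) :
    Buildable G S F (X ∪ Q.innerSet ∪ M.innerSet) (e + Q.inner.length % 2) (n + 1) := by
  have hMQ : ∀ w ∈ M.inner, w ∉ Q.inner := fun w hw hwQ => hM.notMem w hw (.inr hwQ)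
  have hQav := hQ.notMem
  have hQ' : IsEar G (S ∪ (X ∪ M.innerSet)) (F ∪ (X ∪ M.innerSet)) Q :=
    ⟨⟨hQ.isChain, hQ.nodup, by grind⟩, by grind [hQ.a_mem], by grind [hQ.b_mem],
      hQ.two_le_of_closed⟩
  exact (h.concat hQ' hne).mono subset_rfl subset_rfl (by grind) le_rfl le_rfl

/-- The island `C :: D` is attached to the rest of the graph at `v` only; a path `M` from another
vertex into it replaces the closed ear `C` by open ones. -/
lemma IsEarSeq.buildable_island (hC : IsEarSeq G {v} F (C :: D)) (hp : ∀ Q ∈ D, Q.IsProper)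
    (hv : v ∈ F) (hM : IsLink G (F ∪ innerVerts (C :: D)) M) (ha : M.a ∈ F) (hav : M.a ≠ v)
    (hb : M.b ∈ innerVerts (C :: D)) :
    Buildable G {M.a, v} F (innerVerts (C :: D) ∪ M.innerSet)
      (numEven (C :: D) + M.inner.length % 2) (D.length + 2) := by
  induction D using List.reverseRecOn generalizing F M with
  | nil =>
    rw [isEarSeq_singleton] at hC
    have hb' : M.b ∈ C.inner := by simpa using hb
    obtain ⟨M', R, hr⟩ := hC.toIsLink.exists_isRerouting (hM.mono (by grind)) hb'
    simpa using hr.buildable_of_closed hC hv hav hb'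
  | append_singleton D Q ih =>
    rw [← List.cons_append] at hC hM hb
    obtain ⟨hC, hQ⟩ := isEarSeq_concat.1 hC
    have hQne := (hp Q (by simp)).1
    by_cases hz : M.b ∈ Q.inner
    · obtain ⟨M', R, ⟨hMa, hRb, hends, hMl, hRl, hu, hm, -, hpar⟩⟩ :=
        hQ.toIsLink.exists_isRerouting (hM.mono (by grind)) hz
      have hQa := hQ.a_mem
      have hQb := hQ.b_mem
      have hM'av := hMl.notMem
      by_cases hv' : M'.b = v
      · have hM' : IsEar G {M.a, v} F M' :=
          (hMl.mono Set.subset_union_left).isEar (by grind) (by grind) (by grind)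
        have hR := ih (M := R.reverse) (hC.union_right (X := M'.innerSet) (by grind)) (by grind)
          (by grind) (hRl.reverse.mono (by grind)) (by grind) (by grind) (by grind)
        refine ((hM'.buildable (by grind)).append (hR.mono ?_ subset_rfl rfl le_rfl le_rfl)).mono
          subset_rfl subset_rfl ?_ ?_ ?_ <;> grind
      · have h := ih (M := M') hC (by grind) hv hMl (by grind) (by grind) (by grind)
        have hR : IsEar G ({M'.a, v} ∪ (innerVerts (C :: D) ∪ M'.innerSet))
            (F ∪ (innerVerts (C :: D) ∪ M'.innerSet)) R :=
          (hRl.mono (by grind)).isEar (by grind) (by grind) (by grind)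
        refine (h.concat hR (by grind)).mono ?_ subset_rfl ?_ ?_ ?_ <;> grind
    · have h := ih hC (by grind) hv (hM.mono (by grind)) ha hav (by grind)
      exact (h.concat_of_isLink hQ hQne (by simp) (hM.mono (by grind))).mono subset_rfl subset_rfl
        (by grind) (by grind) (by grind)

end Absorb

section Island

variable {A D B B' : List (Arc V)} {C R : Arc V} {v : V}

lemma innerVerts_eq_of_perm (h : L₁.Perm L₂) : innerVerts L₁ = innerVerts L₂ := by
  ext w
  simp only [innerVerts, Set.mem_ofPred_eq, h.mem_iff]

lemma numEven_eq_of_perm (h : L₁.Perm L₂) : numEven L₁ = numEven L₂ :=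
  (h.map _).sum_eq

/-- `A ++ D ++ B` is an ear sequence in which the ears of `D` hang on the single vertex `v`, while
those of `A` do not use `D`. -/
structure IsIsland (G : SimpleGraph V) (S F : Set V) (v : V) (A D B : List (Arc V)) : Prop where
  main : IsEarSeq G S F A
  island : IsEarSeq G {v} (F ∪ innerVerts A) D
  rest : IsEarSeq G (S ∪ innerVerts A ∪ innerVerts D) (F ∪ innerVerts A ∪ innerVerts D) B

lemma IsIsland.push_main (h : IsIsland G S F v A D (R :: B)) (ha : R.a ∈ S ∪ innerVerts A)
    (hb : R.b ∈ S ∪ innerVerts A) : IsIsland G S F v (A ++ [R]) D B := by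
  obtain ⟨hA, hD, hR, hB⟩ := h
  have hRav := hR.notMem
  refine ⟨isEarSeq_concat.2 ⟨hA, hR.toIsLink.mono (by grind), ha, hb, hR.two_le_of_closed⟩,
    (hD.union_right (X := R.innerSet) (by grind)).mono subset_rfl (by grind),
    hB.mono (by grind) (by grind)⟩

lemma IsIsland.push_island (h : IsIsland G S F v A D (R :: B)) (ha : R.a ∈ {v} ∪ innerVerts D)
    (hb : R.b ∈ {v} ∪ innerVerts D) : IsIsland G S F v A (D ++ [R]) B := by
  obtain ⟨hA, hD, hR, hB⟩ := h
  exact ⟨hA, isEarSeq_concat.2 ⟨hD, hR.toIsLink, ha, hb, hR.two_le_of_closed⟩,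
    hB.mono (by grind) (by grind)⟩

/-- `R`, possibly after reversal, either leads from outside into the island `D` at `v`, or stays in
the island and starts in `U`. -/
def Blocks (S : Set V) (v : V) (A D : List (Arc V)) (U : Set V) (R : Arc V) : Prop :=
  ∃ M, (M = R ∨ M = R.reverse) ∧
    ((M.a ∈ S ∪ innerVerts A ∧ M.a ≠ v ∧ M.b ∈ innerVerts D) ∨
      (M.a ∈ U ∧ M.b ∈ {v} ∪ innerVerts D))

lemma IsIsland.exists_grow (h : IsIsland G S F v A D B) (U : Set V) :
    ∃ A' D' B', IsIsland G S F v (A ++ A') (D ++ D') B' ∧ (A' ++ D' ++ B').Perm B ∧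
      (∀ Q ∈ D', Q.a ∉ U ∧ Q.b ∉ U) ∧
      ∀ R ∈ B'.head?, Blocks S v (A ++ A') (D ++ D') U R := by
  induction B generalizing A D with
  | nil => exact ⟨[], [], [], by simpa using h, by simp, by simp, by simp⟩
  | cons R B ih =>
    by_cases hblock : Blocks S v A D U R
    · exact ⟨[], [], R :: B, by simpa using h, by simp, by simp, by simpa using hblock⟩
    have hnot := not_exists.1 hblock
    have hR' := hnot R.reverse
    have ha := h.rest.1.a_mem
    have hb := h.rest.1.b_mem
    by_cases hmain : R.a ∈ S ∪ innerVerts A ∧ R.b ∈ S ∪ innerVerts A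
    · obtain ⟨A', D', B', h', hperm, hU, hhead⟩ := ih (h.push_main hmain.1 hmain.2)
      rw [List.append_assoc] at h' hhead
      exact ⟨R :: A', D', B', h', by simpa using hperm, hU, hhead⟩
    · have hends : R.a ∈ {v} ∪ innerVerts D ∧ R.b ∈ {v} ∪ innerVerts D ∧ R.a ∉ U ∧ R.b ∉ U := by
        grind
      obtain ⟨A', D', B', h', hperm, hU, hhead⟩ := ih (h.push_island hends.1 hends.2.1)
      rw [List.append_assoc] at h' hhead
      refine ⟨A', R :: D', B', h', ?_, by grind, hhead⟩
      simpa using List.perm_middle.trans ((List.append_assoc _ _ _ ▸ hperm).cons R)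

lemma IsIsland.buildable_of_crossing (h : IsIsland G S F v A (C :: D) B') (hv : v ∈ S)
    (hSF : S ⊆ F) (hp : ∀ Q ∈ A ++ D ++ B, Q.IsProper)
    (hM : IsLink G (F ∪ innerVerts A ∪ innerVerts (C :: D)) M)
    (ha : M.a ∈ S ∪ innerVerts A) (hav : M.a ≠ v) (hb : M.b ∈ innerVerts (C :: D))
    (hB : IsEarSeq G (S ∪ innerVerts A ∪ innerVerts (C :: D) ∪ M.innerSet)
      (F ∪ innerVerts A ∪ innerVerts (C :: D) ∪ M.innerSet) B) :
    Buildable G S F (innerVerts A ∪ innerVerts (C :: D) ∪ M.innerSet ∪ innerVerts B)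
      (numEven A + numEven (C :: D) + M.inner.length % 2 + numEven B)
      (A.length + D.length + 2 + B.length) := by
  have hA := h.main.buildable (by grind)
  have hCD := h.island.buildable_island (by grind) (by grind) hM (by grind) hav hb
  have hB' := hB.buildable (by grind)
  have hACD := hA.append (hCD.mono (by grind) subset_rfl rfl le_rfl le_rfl)
  exact (hACD.append (hB'.mono (by grind) (by grind) rfl le_rfl le_rfl)).mono subset_rfl subset_rfl
    (by grind) (by omega) (by omega)

end Island

section Opening

lemma exists_adj_of_induce_compl_connected {v : V} {Z : Set V}
    (hG : (G.induce ({v}ᶜ : Set V)).Connected) {p z : V} (hp : p ∈ Z) (hpv : p ≠ v) (hz : z ∉ Z)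
    (hzv : z ≠ v) : ∃ a b, G.Adj a b ∧ a ∈ Z ∧ a ≠ v ∧ b ∉ Z ∧ b ≠ v := by
  obtain ⟨W⟩ := hG.preconnected ⟨p, hpv⟩ ⟨z, hzv⟩
  obtain ⟨d, -, h₁, h₂⟩ := W.exists_boundary_dart {w | w.1 ∈ Z} hp hz
  exact ⟨d.fst.1, d.snd.1, d.adj, h₁, d.fst.2, h₂, d.snd.2⟩

lemma IsIsland.exists_crossing {v : V} {A D B : List (Arc V)}
    (hG : (G.induce ({v}ᶜ : Set V)).Connected) (h : IsIsland G S F v A D B) (hv : v ∈ S)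
    (hS : S.Nontrivial) (hSF : S ⊆ F) (hD : (innerVerts D).Nonempty)
    (hspan : ∀ w, w ∈ S ∪ innerVerts A ∪ innerVerts D ∪ innerVerts B)
    (hhead : ∀ R ∈ B.head?, Blocks S v A D ∅ R) :
    ∃ M B', IsLink G (F ∪ innerVerts A ∪ innerVerts D) M ∧ M.a ∈ S ∪ innerVerts A ∧ M.a ≠ v ∧
      M.b ∈ innerVerts D ∧ IsEarSeq G (S ∪ innerVerts A ∪ innerVerts D ∪ M.innerSet)
        (F ∪ innerVerts A ∪ innerVerts D ∪ M.innerSet) B' ∧ B' ⊆ B ∧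
      (∀ w, w ∈ innerVerts B ↔ w ∈ M.inner ∨ w ∈ innerVerts B') ∧
      numEven B = M.inner.length % 2 + numEven B' := by
  cases B with
  | nil =>
    obtain ⟨z, hz⟩ := hD
    obtain ⟨p, hp, hpv⟩ := hS.exists_ne v
    have hzav := h.island.notMem z hz
    obtain ⟨a, b, hab, ha, hav, hb, -⟩ := exists_adj_of_induce_compl_connected hG
      (Z := S ∪ innerVerts A) (p := p) (z := z) (by grind) hpv (by grind) (by grind)
    refine ⟨⟨a, [], b⟩, [], ⟨by simpa using hab, by simp, by simp⟩, ha, hav, ?_, trivial,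
      List.Subset.refl _, by grind, by simp⟩
    grind [hspan b]
  | cons R B =>
    obtain ⟨M, hMR, hM⟩ := hhead R rfl
    obtain ⟨ha, hav, hb⟩ := hM.resolve_right (by grind)
    have hRl := h.rest.1.toIsLink
    rcases hMR with rfl | rfl
    · exact ⟨M, B, hRl, ha, hav, hb, h.rest.2, by simp, by simp, by simp⟩
    · exact ⟨R.reverse, B, hRl.reverse, ha, hav, hb, innerSet_reverse (P := R) ▸ h.rest.2, by simp,
        by simp, by simp⟩

lemma Buildable.of_closed_ear (hG : (G.induce ({P.a}ᶜ : Set V)).Connected) {e n : ℕ}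
    (hS : S.Nontrivial) (hP : IsEar G S S P) (hclosed : P.a = P.b)
    (hL : Buildable G (S ∪ P.innerSet) (S ∪ P.innerSet) X e n)
    (hspan : ∀ w, w ∈ S ∪ P.innerSet ∪ X) :
    ∃ n, Buildable G S S (P.innerSet ∪ X) (P.inner.length % 2 + e) n := by
  obtain ⟨L, hL, hp, rfl, he, -⟩ := hL
  have hisl : IsIsland G S S P.a [] [P] L :=
    ⟨trivial, isEarSeq_singleton.2 ⟨hP.toIsLink.mono (by simp), rfl, hclosed.symm,
      hP.two_le_of_closed⟩, by simpa using hL⟩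
  obtain ⟨A, D, B, h, hperm, -, hhead⟩ := hisl.exists_grow ∅
  simp only [List.nil_append, List.cons_append] at h hhead
  have hverts := Set.ext_iff.1 (innerVerts_eq_of_perm hperm)
  have heven := numEven_eq_of_perm hperm
  have hlen := hP.two_le_of_closed hclosed
  obtain ⟨w, hw⟩ := List.exists_mem_of_length_pos (by omega : 0 < P.inner.length)
  obtain ⟨M, B', hM, ha, hav, hb, hB', hsub, hBv, hBe⟩ := h.exists_crossing hG hP.a_mem hS
    subset_rfl ⟨w, by grind⟩ (fun w => by grind [hspan w]) hhead
  refine ⟨_, (h.buildable_of_crossing hP.a_mem subset_rfl ?_ hM ha hav hb hB').mono subset_rfl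
    subset_rfl ?_ ?_ le_rfl⟩ <;> grind

lemma IsEarSeq.exists_buildable (hG : ∀ v : V, (G.induce ({v}ᶜ : Set V)).Connected)
    (hL : IsEarSeq G S S L) (hS : S.Nontrivial) (hspan : ∀ w, w ∈ S ∪ innerVerts L) :
    ∃ n, Buildable G S S (innerVerts L) (numEven L) n := by
  induction L generalizing S with
  | nil => exact ⟨0, by simpa using Buildable.empty⟩
  | cons P L ih =>
    obtain ⟨n, h⟩ := ih hL.2 (hS.mono Set.subset_union_left) (by grind)
    rw [innerVerts_cons, numEven_cons]
    by_cases hclosed : P.a = P.b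
    · exact h.of_closed_ear (hG P.a) hS hL.1 hclosed (by grind)
    · exact ⟨_, (hL.1.buildable hclosed).append h⟩

end Opening

section Improve

variable {A D B : List (Arc V)} {x y u v : V} {q : List V} {e e' n n' : ℕ}

/-- Starting from `S`, the vertex set `X` can be added by at most `n` open nontrivial ears, at most
`e` of them even, the first of which is long; the ears avoid `F`. -/
def HasLongStart (G : SimpleGraph V) (S F X : Set V) (e n : ℕ) : Prop :=
  ∃ P Y e' n', IsEar G S F P ∧ P.a ≠ P.b ∧ 3 ≤ P.inner.length ∧
    Buildable G (S ∪ P.innerSet) (F ∪ P.innerSet) Y e' n' ∧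
    (∀ w, w ∈ P.inner ∨ w ∈ Y ↔ w ∈ X) ∧ P.inner.length % 2 + e' ≤ e ∧ 1 + n' ≤ n

/-- The vertex set `X` can be added either by fewer than `n` ears, or by `n` ears the first of which
is long and has its ends in `S`; in the first case the ears may be attached to `F` as well. -/
def Improvable (G : SimpleGraph V) (S F X : Set V) (e n : ℕ) : Prop :=
  (∃ n' < n, Buildable G F F X e n') ∨ HasLongStart G S F X e n

lemma HasLongStart.mono (h : HasLongStart G S F X e n) (hS : S ⊆ S') (hF : F' ⊆ F) :
    HasLongStart G S' F' X e n := by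
  obtain ⟨P, Y, e', n', hP, hne, hlong, hY, h⟩ := h
  exact ⟨P, Y, e', n', hP.mono hS hF, hne, hlong,
    hY.mono (by grind) (by grind) rfl le_rfl le_rfl, h⟩

lemma HasLongStart.append (h : HasLongStart G S F X e n)
    (h' : Buildable G (S ∪ X) (F ∪ X) Y e' n') : HasLongStart G S F (X ∪ Y) (e + e') (n + n') := by
  obtain ⟨P, Z, e₁, n₁, hP, hne, hlong, hZ, hX, he, hn⟩ := h
  refine ⟨P, Z ∪ Y, e₁ + e', n₁ + n', hP, hne, hlong,
    hZ.append (h'.mono ?_ ?_ rfl le_rfl le_rfl), fun w => ?_, by omega, by omega⟩ <;> grind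

lemma HasLongStart.mono_right (h : HasLongStart G S F X e n) (hX : X = Y) (he : e ≤ e')
    (hn : n ≤ n') : HasLongStart G S F Y e' n' := by
  subst hX
  obtain ⟨P, Z, e₁, n₁, hP, hne, hlong, hZ, hmem, he₁, hn₁⟩ := h
  exact ⟨P, Z, e₁, n₁, hP, hne, hlong, hZ, hmem, he₁.trans he, hn₁.trans hn⟩

lemma Improvable.congr (h : Improvable G S F X e n) (hX : X = Y) (he : e = e') (hn : n = n') :
    Improvable G S F Y e' n' := by
  subst hX he hn
  exact h

/-- The path `M` from `u` back to `x` or `v` makes the ear `x u v y` longer: a path ending in `x`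
gives `y v u M x`, a path ending in `v` gives `x u M v y`. -/
lemma IsLink.exists_isEar_through (hxu : G.Adj x u) (huv : G.Adj u v) (hvy : G.Adj v y)
    (hxy : x ≠ y) (hu : u ∉ F) (hv : v ∉ F) (hM : IsLink G (F ∪ {u, v}) M) (ha : M.a = u)
    (hb : M.b ∈ ({x, v} : Set V)) :
    ∃ P, IsEar G {x, y} F P ∧ P.a ≠ P.b ∧ P.inner.Perm (u :: v :: M.inner) := by
  obtain ⟨a, m, b⟩ := M
  obtain rfl : a = u := ha
  have hnd := hM.nodup
  have hav := hM.notMem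
  have hchain := hM.isChain
  have hne := huv.ne
  dsimp only at *
  rcases hb with rfl | rfl
  · refine ⟨⟨y, v :: a :: m, b⟩, ⟨⟨?_, by grind, by grind⟩, by simp, by simp, by grind⟩, hxy.symm,
      .swap _ _ _⟩
    simpa [hvy.symm, huv.symm] using hchain
  · refine ⟨⟨x, a :: m ++ [b], y⟩, ⟨⟨?_, ?_, by grind⟩, by simp, by simp, by grind⟩, hxy, ?_⟩
    · have hchain' := List.isChain_split.2 ⟨hchain, List.isChain_pair.2 hvy⟩
      simpa [hxu] using hchain'
    · simp only [List.cons_append, List.nodup_cons, List.nodup_append]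
      grind
    · exact (List.perm_append_singleton _ _).cons _

lemma IsEarSeq.hasLongStart (h : IsEarSeq G {x} F (⟨x, u :: v :: q, x⟩ :: D)) (hq : q ≠ [])
    (hvy : G.Adj v y) (hxy : x ≠ y) (hx : x ∈ F) (hp : ∀ Q ∈ D, Q.IsProper)
    (hD : ∀ Q ∈ D, Q.a ≠ u ∧ Q.b ≠ u)
    (hM : IsLink G (F ∪ innerVerts (⟨x, u :: v :: q, x⟩ :: D)) M) (ha : M.a = u)
    (hb : M.b ∈ {x} ∪ innerVerts (⟨x, u :: v :: q, x⟩ :: D)) (hbu : M.b ≠ u)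
    (hlong : M.inner ≠ [] ∨ M.b ≠ x ∧ M.b ≠ v) :
    HasLongStart G {x, y} F (innerVerts (⟨x, u :: v :: q, x⟩ :: D) ∪ M.innerSet)
      (numEven (⟨x, u :: v :: q, x⟩ :: D) + M.inner.length % 2) (D.length + 2) := by
  obtain ⟨hC, hDseq⟩ := h
  have hadj := hC.isChain
  have hnd := hC.nodup
  have hav := hC.notMem
  simp only [List.cons_append, List.isChain_cons_cons] at hadj
  have hQ : IsEar G {x, v} (F ∪ {u, v}) ⟨v, q, x⟩ :=
    ⟨⟨hadj.2.2, by grind, by grind⟩, by simp, by simp, by grind⟩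
  have hQD : IsEarSeq G {x, v} (F ∪ {u, v}) (⟨v, q, x⟩ :: D) :=
    ⟨hQ, (hDseq.mono (by grind) (by grind)).of_ends_notMem (X := {u}) hD⟩
  obtain ⟨M', hM'⟩ := hQD.exists_isAbsorption (M := M) (by grind [IsProper]) (by grind)
    (hM.mono (by grind)) (by grind)
  obtain ⟨X, e, hX, hmem, he⟩ := hM'.exists_rest
  obtain ⟨P, hP, hne, hperm⟩ := hM'.isLink.exists_isEar_through (G := G) hadj.1 hadj.2.1 hvy hxy
    (by grind) (by grind) (hM'.a_eq.trans ha) hM'.b_mem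
  have hPlen := hperm.length_eq
  have hM'ne : M'.inner ≠ [] := by
    intro hnil
    have hsub := hM'.inner_subset
    have hor := hM'.b_mem_or
    rw [hnil, List.subset_nil] at hsub
    grind
  have hpos := List.length_pos_iff.2 hM'ne
  refine ⟨P, X, e, D.length + 1, hP, hne, by grind, hX.mono ?_ ?_ rfl le_rfl le_rfl, ?_, ?_, ?_⟩ <;>
    grind

lemma IsIsland.hasLongStart {B' : List (Arc V)}
    (h : IsIsland G S F x A (⟨x, u :: v :: q, x⟩ :: D) B') (hSF : S ⊆ F) (hx : x ∈ S) (hy : y ∈ S)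
    (hxy : x ≠ y) (hvy : G.Adj v y) (hq : q ≠ []) (hp : ∀ Q ∈ A ++ D ++ B, Q.IsProper)
    (hD : ∀ Q ∈ D, Q.a ≠ u ∧ Q.b ≠ u)
    (hM : IsLink G (F ∪ innerVerts A ∪ innerVerts (⟨x, u :: v :: q, x⟩ :: D)) M) (ha : M.a = u)
    (hb : M.b ∈ {x} ∪ innerVerts (⟨x, u :: v :: q, x⟩ :: D)) (hbu : M.b ≠ u)
    (hlong : M.inner ≠ [] ∨ M.b ≠ x ∧ M.b ≠ v)
    (hB : IsEarSeq G (S ∪ innerVerts A ∪ innerVerts (⟨x, u :: v :: q, x⟩ :: D) ∪ M.innerSet)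
      (F ∪ innerVerts A ∪ innerVerts (⟨x, u :: v :: q, x⟩ :: D) ∪ M.innerSet) B) :
    HasLongStart G S F
      (innerVerts A ∪ innerVerts (⟨x, u :: v :: q, x⟩ :: D) ∪ M.innerSet ∪ innerVerts B)
      (numEven A + numEven (⟨x, u :: v :: q, x⟩ :: D) + M.inner.length % 2 + numEven B)
      (A.length + D.length + 2 + B.length) := by
  have hstart := h.island.hasLongStart hq hvy hxy (by grind) (by grind) hD hM ha hb hbu hlong
  have hCav := h.island.notMem
  have hMav := hM.notMem
  have hA := h.main.union_right
    (X := innerVerts (⟨x, u :: v :: q, x⟩ :: D) ∪ M.innerSet) (by grind)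
  have hAbuild := (hA.mono (S' := S ∪ (innerVerts (⟨x, u :: v :: q, x⟩ :: D) ∪ M.innerSet))
    Set.subset_union_left subset_rfl).buildable (by grind)
  have hBbuild := hB.buildable (by grind)
  have hstartA := (hstart.mono (S' := S) (F' := F) (by grind) (by grind)).append hAbuild
  have hall := hstartA.append (hBbuild.mono (by grind) (by grind) rfl le_rfl le_rfl)
  exact hall.mono_right (by grind) (by omega) (by omega)

lemma IsIsland.improvable_of_blocks {R : Arc V}
    (h : IsIsland G S F x A (⟨x, u :: v :: q, x⟩ :: D) (R :: B)) (hSF : S ⊆ F) (hx : x ∈ S)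
    (hy : y ∈ S) (hxy : x ≠ y) (hvy : G.Adj v y) (hq : q ≠ [])
    (hp : ∀ Q ∈ A ++ D ++ R :: B, Q.IsProper) (hD : ∀ Q ∈ D, Q.a ≠ u ∧ Q.b ≠ u)
    (hR : Blocks S x A (⟨x, u :: v :: q, x⟩ :: D) {u} R) :
    Improvable G S F (innerVerts A ∪ innerVerts (⟨x, u :: v :: q, x⟩ :: D) ∪ innerVerts (R :: B))
      (numEven A + numEven (⟨x, u :: v :: q, x⟩ :: D) + numEven (R :: B))
      (A.length + D.length + 3 + B.length) := by
  obtain ⟨M, hMR, hM⟩ := hR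
  have hset : M.innerSet = R.innerSet := by grind
  have hlen : M.inner.length = R.inner.length := by grind
  have hMproper : M.IsProper := by grind [IsProper.reverse]
  have hMlink : IsLink G (F ∪ innerVerts A ∪ innerVerts (⟨x, u :: v :: q, x⟩ :: D)) M := by
    rcases hMR with rfl | rfl
    exacts [h.rest.1.toIsLink, h.rest.1.toIsLink.reverse]
  have hB := h.rest.2
  rw [← hset] at hB
  rw [innerVerts_cons (P := R), numEven_cons (P := R), ← hset, ← hlen, ← Set.union_assoc,
    ← Nat.add_assoc]
  rcases hM with ⟨ha, hax, hb⟩ | ⟨ha, hb⟩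
  · exact .inl ⟨_, by omega, (h.buildable_of_crossing hx hSF (by grind) hMlink ha hax hb hB).mono
      hSF subset_rfl rfl le_rfl le_rfl⟩
  · obtain rfl : M.a = u := ha
    exact .inr ((h.hasLongStart hSF hx hy hxy hvy hq (by grind) hD hMlink rfl hb hMproper.1.symm
      (.inl hMproper.2) hB).mono_right rfl le_rfl (by omega))

lemma IsIsland.improvable_of_spanning (hdeg : ∀ u x v : V, ∃ z, G.Adj u z ∧ z ≠ x ∧ z ≠ v)
    (h : IsIsland G S F x A (⟨x, u :: v :: q, x⟩ :: D) []) (hSF : S ⊆ F) (hx : x ∈ S)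
    (hy : y ∈ S) (hxy : x ≠ y) (hvy : G.Adj v y) (hq : q ≠ [])
    (hp : ∀ Q ∈ A ++ D, Q.IsProper) (hD : ∀ Q ∈ D, Q.a ≠ u ∧ Q.b ≠ u)
    (hspan : ∀ w, w ∈ F ∪ innerVerts A ∪ innerVerts (⟨x, u :: v :: q, x⟩ :: D)) :
    Improvable G S F (innerVerts A ∪ innerVerts (⟨x, u :: v :: q, x⟩ :: D))
      (numEven A + numEven (⟨x, u :: v :: q, x⟩ :: D)) (A.length + D.length + 2) := by
  obtain ⟨z, huz, hzx, hzv⟩ := hdeg u x v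
  obtain ⟨hC, hDseq⟩ := h.island
  by_cases hz : z ∈ F ∪ innerVerts A
  · left
    have hchain := hC.isChain
    simp only [List.cons_append, List.isChain_cons_cons] at hchain
    have hN : IsEar G (F ∪ innerVerts A) (F ∪ innerVerts A) ⟨z, u :: v :: q, x⟩ :=
      ⟨⟨by simpa using ⟨huz.symm, hchain.2⟩, hC.nodup, hC.notMem⟩, hz, by grind, by grind⟩
    have hAN := ((h.main.mono hSF subset_rfl).buildable (by grind)).append (hN.buildable hzx)
    refine ⟨A.length + D.length + 1, by omega, (hAN.append
      ((hDseq.buildable (by grind)).mono ?_ ?_ rfl le_rfl le_rfl)).mono subset_rfl subset_rfl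
        ?_ ?_ ?_⟩ <;> grind
  · right
    have hM : IsLink G (F ∪ innerVerts A ∪ innerVerts (⟨x, u :: v :: q, x⟩ :: D)) ⟨u, [], z⟩ :=
      ⟨by simpa using huz, by simp, by simp⟩
    have hstart := h.hasLongStart (B := []) hSF hx hy hxy hvy hq (by grind) hD hM rfl
      (by grind [hspan z]) huz.ne' (.inr ⟨hzx, hzv⟩) trivial
    exact hstart.mono_right (by grind) (by grind) (by grind)

lemma IsIsland.improvable (hdeg : ∀ u x v : V, ∃ z, G.Adj u z ∧ z ≠ x ∧ z ≠ v)
    (h : IsIsland G S F x A [⟨x, u :: v :: q, x⟩] B) (hSF : S ⊆ F) (hx : x ∈ S)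
    (hy : y ∈ S) (hxy : x ≠ y) (hvy : G.Adj v y) (hq : q ≠ []) (hp : ∀ Q ∈ A ++ B, Q.IsProper)
    (hspan : ∀ w, w ∈ F ∪ innerVerts A ∪ innerVerts [⟨x, u :: v :: q, x⟩] ∪ innerVerts B) :
    Improvable G S F (innerVerts A ∪ innerVerts [⟨x, u :: v :: q, x⟩] ∪ innerVerts B)
      (numEven A + numEven [⟨x, u :: v :: q, x⟩] + numEven B) (A.length + B.length + 2) := by
  obtain ⟨A', D, B', h', hperm, hD, hhead⟩ := h.exists_grow {u}
  simp only [List.cons_append, List.nil_append] at h' hhead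
  have hverts := Set.ext_iff.1 (innerVerts_eq_of_perm hperm)
  have heven := numEven_eq_of_perm hperm
  have hlen := hperm.length_eq
  cases B' with
  | nil =>
    refine (h'.improvable_of_spanning hdeg hSF hx hy hxy hvy hq (by grind) hD
      fun w => ?_).congr ?_ ?_ ?_
    · grind [hspan w]
    all_goals grind
  | cons R B' =>
    refine (h'.improvable_of_blocks hSF hx hy hxy hvy hq (by grind) hD
      (hhead R rfl)).congr ?_ ?_ ?_ <;> grind

end Improve

section NonPendant

variable {A B : List (Arc V)} {R N : Arc V} {a x y u v : V} {l : List V}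

lemma IsEarSeq.reverse_head (h : IsEarSeq G S F (P :: L)) : IsEarSeq G S F (P.reverse :: L) :=
  ⟨h.1.reverse, by simpa using h.2⟩

lemma IsEarSeq.swap (h : IsEarSeq G S F (P :: R :: L)) (ha : R.a ∉ P.inner) (hb : R.b ∉ P.inner) :
    IsEarSeq G S F (R :: P :: L) := by
  obtain ⟨hP, hR, hL⟩ := h
  have hPav := hP.notMem
  have hRav := hR.notMem
  have hRa := hR.a_mem
  have hRb := hR.b_mem
  exact ⟨⟨hR.toIsLink.mono (by grind), by grind, by grind, hR.two_le_of_closed⟩,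
    ⟨⟨hP.isChain, hP.nodup, by grind⟩, .inl hP.a_mem, .inl hP.b_mem, hP.two_le_of_closed⟩,
    hL.mono (by grind) (by grind)⟩

lemma IsEarSeq.exists_first_touching (h : IsEarSeq G S F (P :: L))
    (htouch : ∃ Q ∈ L, Q.a ∈ P.inner ∨ Q.b ∈ P.inner) :
    ∃ A Q B, L = A ++ Q :: B ∧ IsEarSeq G S F A ∧
      IsEarSeq G (S ∪ innerVerts A) (F ∪ innerVerts A) (P :: Q :: B) ∧
      (Q.a ∈ P.inner ∨ Q.b ∈ P.inner) := by
  induction L generalizing S F with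
  | nil => simp at htouch
  | cons R L ih =>
    by_cases hR : R.a ∈ P.inner ∨ R.b ∈ P.inner
    · exact ⟨[], R, L, rfl, trivial, by simpa using h, hR⟩
    · obtain ⟨hR₁, hPL⟩ := h.swap (by grind) (by grind)
      obtain ⟨A, Q, B, rfl, hA, hPQ, hQ⟩ := ih hPL (by grind)
      exact ⟨R :: A, Q, B, rfl, ⟨hR₁, hA⟩, by simpa [Set.union_assoc] using hPQ, hQ⟩

lemma improvable_of_merge (hSF : S ⊆ F) (hA : IsEarSeq G S F A)
    (hPQ : IsEarSeq G (S ∪ innerVerts A) (F ∪ innerVerts A) (P :: Q :: B))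
    (hp : ∀ R ∈ A ++ B, R.IsProper) (hN : IsEar G (F ∪ innerVerts A) (F ∪ innerVerts A) N)
    (hne : N.a ≠ N.b) (hmem : ∀ w, w ∈ N.inner ↔ w ∈ P.inner ∨ w ∈ Q.inner)
    (hpar : N.inner.length % 2 ≤ P.inner.length % 2 + Q.inner.length % 2) :
    Improvable G S F (innerVerts (A ++ P :: Q :: B)) (numEven (A ++ P :: Q :: B))
      (A ++ P :: Q :: B).length := by
  left
  have hAN := ((hA.mono hSF subset_rfl).buildable (by grind)).append (hN.buildable hne)
  have hB := hPQ.2.2.buildable (by grind)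
  refine ⟨A.length + 1 + B.length, by grind, (hAN.append (hB.mono ?_ ?_ rfl le_rfl le_rfl)).mono
    subset_rfl subset_rfl ?_ ?_ le_rfl⟩ <;> grind

lemma improvable_of_two_edge_ear (hSF : S ⊆ F) (hx : x ∈ S) (hy : y ∈ S) (hA : IsEarSeq G S F A)
    (h : IsEarSeq G (S ∪ innerVerts A) (F ∪ innerVerts A) (⟨x, [v], y⟩ :: ⟨a, l, v⟩ :: B))
    (hp : ∀ R ∈ A ++ ⟨x, [v], y⟩ :: ⟨a, l, v⟩ :: B, R.IsProper) :
    Improvable G S F (innerVerts (A ++ ⟨x, [v], y⟩ :: ⟨a, l, v⟩ :: B))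
      (numEven (A ++ ⟨x, [v], y⟩ :: ⟨a, l, v⟩ :: B))
      (A ++ ⟨x, [v], y⟩ :: ⟨a, l, v⟩ :: B).length := by
  have hPch := h.1.isChain
  have hPav := h.1.notMem
  have hQav := h.2.1.notMem
  have hQa := h.2.1.a_mem
  have hxy : x ≠ y := (hp ⟨x, [v], y⟩ (by simp)).1
  have hav : a ≠ v := (hp ⟨a, l, v⟩ (by simp)).1
  simp only [List.cons_append, List.nil_append, List.isChain_cons_cons] at hPch
  obtain ⟨t, ht, hat, hvt⟩ : ∃ t ∈ S, a ≠ t ∧ G.Adj v t := by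
    by_cases hax : a = x
    · exact ⟨y, hy, by grind, hPch.2.1⟩
    · exact ⟨x, hx, hax, hPch.1.symm⟩
  have hN : IsLink G (F ∪ innerVerts A) ⟨a, l ++ [v], t⟩ :=
    (h.2.1.toIsLink.mono Set.subset_union_left).append ⟨by simpa using hvt, by simp, by simp⟩
      (hPav v (by simp)) (by grind [List.nodup_append, h.2.1.nodup])
  exact improvable_of_merge hSF hA h (by grind) (hN.isEar (by grind) (by grind) hat) hat (by grind)
    (by grind)

/-- The two ears contain a cycle through `x`, which is an island attached at `x`. -/
lemma improvable_of_three_edge_ear_of_shared_end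
    (hdeg : ∀ u x v : V, ∃ z, G.Adj u z ∧ z ≠ x ∧ z ≠ v)
    (hSF : S ⊆ F) (hx : x ∈ S) (hy : y ∈ S) (hA : IsEarSeq G S F A)
    (h : IsEarSeq G (S ∪ innerVerts A) (F ∪ innerVerts A) (⟨x, [u, v], y⟩ :: ⟨x, l, v⟩ :: B))
    (hp : ∀ R ∈ A ++ ⟨x, [u, v], y⟩ :: ⟨x, l, v⟩ :: B, R.IsProper)
    (hspan : ∀ w, w ∈ F ∪ innerVerts (A ++ ⟨x, [u, v], y⟩ :: ⟨x, l, v⟩ :: B)) :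
    Improvable G S F (innerVerts (A ++ ⟨x, [u, v], y⟩ :: ⟨x, l, v⟩ :: B))
      (numEven (A ++ ⟨x, [u, v], y⟩ :: ⟨x, l, v⟩ :: B))
      (A ++ ⟨x, [u, v], y⟩ :: ⟨x, l, v⟩ :: B).length := by
  have hPch := h.1.isChain
  have hPav := h.1.notMem
  have hPnd := h.1.nodup
  have hQav := h.2.1.notMem
  have hQnd := h.2.1.nodup
  have hxy : x ≠ y := (hp ⟨x, [u, v], y⟩ (by simp)).1
  have hl : l ≠ [] := (hp ⟨x, l, v⟩ (by simp)).2
  simp only [List.cons_append, List.nil_append, List.isChain_cons_cons] at hPch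
  obtain ⟨hxu, huv, hvy, -⟩ := hPch
  have hC : IsEar G {x} (F ∪ innerVerts A) ⟨x, u :: v :: l.reverse, x⟩ := by
    have hrev := h.2.1.toIsLink.reverse.isChain
    refine ⟨⟨?_, by grind [List.nodup_reverse], by grind⟩, rfl, rfl, by simp⟩
    simpa [hxu, huv, reverse] using hrev
  have hisl : IsIsland G S F x A [⟨x, u :: v :: l.reverse, x⟩] B :=
    ⟨hA, isEarSeq_singleton.2 hC, h.2.2.mono (by grind) (by grind)⟩
  refine (hisl.improvable hdeg hSF hx hy hxy hvy (by simpa using hl) (by grind)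
    fun w => ?_).congr ?_ ?_ ?_
  · grind [hspan w]
  all_goals grind

lemma improvable_of_three_edge_ear (hdeg : ∀ u x v : V, ∃ z, G.Adj u z ∧ z ≠ x ∧ z ≠ v)
    (hSF : S ⊆ F) (hx : x ∈ S) (hy : y ∈ S) (hA : IsEarSeq G S F A)
    (h : IsEarSeq G (S ∪ innerVerts A) (F ∪ innerVerts A) (⟨x, [u, v], y⟩ :: ⟨a, l, v⟩ :: B))
    (hp : ∀ R ∈ A ++ ⟨x, [u, v], y⟩ :: ⟨a, l, v⟩ :: B, R.IsProper)
    (hspan : ∀ w, w ∈ F ∪ innerVerts (A ++ ⟨x, [u, v], y⟩ :: ⟨a, l, v⟩ :: B)) :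
    Improvable G S F (innerVerts (A ++ ⟨x, [u, v], y⟩ :: ⟨a, l, v⟩ :: B))
      (numEven (A ++ ⟨x, [u, v], y⟩ :: ⟨a, l, v⟩ :: B))
      (A ++ ⟨x, [u, v], y⟩ :: ⟨a, l, v⟩ :: B).length := by
  have hPch := h.1.isChain
  have hPav := h.1.notMem
  have hPnd := h.1.nodup
  have hQ := h.2.1.toIsLink
  have hQav := hQ.notMem
  have hQnd := hQ.nodup
  have hQa := h.2.1.a_mem
  have hxy : x ≠ y := (hp ⟨x, [u, v], y⟩ (by simp)).1
  have hav : a ≠ v := (hp ⟨a, l, v⟩ (by simp)).1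
  simp only [List.cons_append, List.nil_append, List.isChain_cons_cons] at hPch
  obtain ⟨hxu, huv, hvy, -⟩ := hPch
  have hQ' : IsLink G (F ∪ innerVerts A) ⟨a, l, v⟩ := hQ.mono Set.subset_union_left
  by_cases hau : a = u
  · subst hau
    have hN : IsLink G (F ∪ innerVerts A) ⟨x, [] ++ a :: (l ++ [v]), y⟩ :=
      .append ⟨by simpa using hxu, by simp, by simp⟩
        (hQ'.append ⟨by simpa using hvy, by simp, by simp⟩ (hPav v (by simp))
          (by grind [List.nodup_append])) (hPav a (by simp)) (by grind [List.nodup_append])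
    exact improvable_of_merge hSF hA h (by grind) (hN.isEar (by grind) (by grind) hxy) hxy
      (by grind) (by grind)
  by_cases hax : a = x
  · subst hax
    exact improvable_of_three_edge_ear_of_shared_end hdeg hSF hx hy hA h hp hspan
  · have hN : IsLink G (F ∪ innerVerts A) ⟨a, l ++ [v, u], x⟩ :=
      hQ'.append ⟨by simpa using ⟨huv.symm, hxu.symm⟩, by simp, by grind⟩ (hPav v (by simp))
        (by grind [List.nodup_append])
    exact improvable_of_merge hSF hA h (by grind) (hN.isEar (by grind) (by grind) hax) hax
      (by grind) (by grind)

lemma improvable_of_touching_end (hdeg : ∀ u x v : V, ∃ z, G.Adj u z ∧ z ≠ x ∧ z ≠ v)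
    (hSF : S ⊆ F) (hPa : P.a ∈ S) (hPb : P.b ∈ S) (hA : IsEarSeq G S F A)
    (h : IsEarSeq G (S ∪ innerVerts A) (F ∪ innerVerts A) (P :: Q :: B))
    (hp : ∀ R ∈ A ++ P :: Q :: B, R.IsProper) (hshort : P.inner.length < 3)
    (hspan : ∀ w, w ∈ F ∪ innerVerts (A ++ P :: Q :: B)) (hQ : Q.b ∈ P.inner) :
    Improvable G S F (innerVerts (A ++ P :: Q :: B)) (numEven (A ++ P :: Q :: B))
      (A ++ P :: Q :: B).length := by
  have hPne := List.length_pos_iff.2 (hp P (by simp)).2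
  obtain ⟨x, i, y⟩ := P
  obtain ⟨a, l, b⟩ := Q
  dsimp only at hPa hPb hPne hshort hQ
  rcases (by omega : i.length = 1 ∨ i.length = 2) with hi | hi
  · obtain ⟨v, rfl⟩ := List.length_eq_one_iff.1 hi
    obtain rfl : b = v := by simpa using hQ
    exact improvable_of_two_edge_ear hSF hPa hPb hA h hp
  · obtain ⟨u, v, rfl⟩ := List.length_eq_two.1 hi
    obtain rfl | rfl : b = u ∨ b = v := by simpa using hQ
    · have h' : IsEarSeq G (S ∪ innerVerts A) (F ∪ innerVerts A)
          (⟨y, [v, b], x⟩ :: ⟨a, l, b⟩ :: B) := h.reverse_head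
      refine (improvable_of_three_edge_ear hdeg hSF hPb hPa hA h' ?_ fun w => ?_).congr ?_ ?_ ?_
      · have hP : IsProper ⟨y, [v, b], x⟩ := (hp ⟨x, [b, v], y⟩ (by simp)).reverse
        grind
      · grind [hspan w]
      all_goals grind
    · exact improvable_of_three_edge_ear hdeg hSF hPa hPb hA h hp hspan

lemma IsEarSeq.improvable (hdeg : ∀ u x v : V, ∃ z, G.Adj u z ∧ z ≠ x ∧ z ≠ v) (hSF : S ⊆ F)
    (h : IsEarSeq G S F (P :: L)) (hp : ∀ R ∈ P :: L, R.IsProper) (hshort : P.inner.length < 3)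
    (hspan : ∀ w, w ∈ F ∪ innerVerts (P :: L))
    (htouch : ∃ Q ∈ L, Q.a ∈ P.inner ∨ Q.b ∈ P.inner) :
    Improvable G S F (innerVerts (P :: L)) (numEven (P :: L)) (P :: L).length := by
  have hPa := h.1.a_mem
  have hPb := h.1.b_mem
  obtain ⟨A, Q, B, rfl, hA, hPQ, ha | hb⟩ := h.exists_first_touching htouch
  · have hQ := hp Q (by simp)
    refine (improvable_of_touching_end (Q := Q.reverse) hdeg hSF hPa hPb hA
      ⟨hPQ.1, hPQ.2.reverse_head⟩ ?_ hshort (fun w => ?_) ha).congr ?_ ?_ ?_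
    · grind [hQ.reverse]
    · grind [hspan w]
    all_goals grind
  · refine (improvable_of_touching_end hdeg hSF hPa hPb hA hPQ (by grind) hshort
      (fun w => ?_) hb).congr ?_ ?_ ?_
    · grind [hspan w]
    all_goals grind

end NonPendant

section PendantSplit

/-- A spanning sequence of open ears over `S` in which the long ears `A` come first and every short
ear in `C` is pendant. -/
structure IsPendantSplit (G : SimpleGraph V) (S : Set V) (A C : List (Arc V)) : Prop where
  isEarSeq : IsEarSeq G S S (A ++ C)
  long : ∀ Q ∈ A, Q.a ≠ Q.b ∧ 3 ≤ Q.inner.length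
  short : ∀ Q ∈ C, Q.IsProper ∧ Q.inner.length < 3
  ends_mem : ∀ Q ∈ C, Q.a ∈ S ∪ innerVerts A ∧ Q.b ∈ S ∪ innerVerts A
  spanning : ∀ w, w ∈ S ∪ innerVerts (A ++ C)

/-- A spanning sequence of open nontrivial ears over `S`, of which the short ears `C` have been set
aside: no ear of the remaining sequence `L` has an end inside them. -/
structure IsPartialSplit (G : SimpleGraph V) (S : Set V) (C L : List (Arc V)) : Prop where
  isEarSeq_short : IsEarSeq G S S C
  short : ∀ Q ∈ C, Q.IsProper ∧ Q.inner.length < 3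
  ends_mem : ∀ Q ∈ C, Q.a ∈ S ∧ Q.b ∈ S
  isEarSeq : IsEarSeq G S (S ∪ innerVerts C) L
  isProper : ∀ Q ∈ L, Q.IsProper
  spanning : ∀ w, w ∈ S ∪ innerVerts (C ++ L)

variable {A C : List (Arc V)}

lemma IsPendantSplit.cons (h : IsPendantSplit G (S ∪ P.innerSet) A C) (hP : IsEar G S S P)
    (hne : P.a ≠ P.b) (hlong : 3 ≤ P.inner.length) : IsPendantSplit G S (P :: A) C where
  isEarSeq := ⟨hP, h.isEarSeq⟩
  long := by grind [h.long]
  short := h.short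
  ends_mem := by grind [h.ends_mem]
  spanning w := by grind [h.spanning w]

lemma IsPartialSplit.isPendantSplit (h : IsPartialSplit G S C []) : IsPendantSplit G S [] C where
  isEarSeq := h.isEarSeq_short
  long := by simp
  short := h.short
  ends_mem := by simpa using h.ends_mem
  spanning := by simpa using h.spanning

lemma IsEarSeq.isPartialSplit (h : IsEarSeq G S S L) (hp : ∀ Q ∈ L, Q.IsProper)
    (hspan : ∀ w, w ∈ S ∪ innerVerts L) : IsPartialSplit G S [] L :=
  ⟨trivial, by simp, by simp, by simpa using h, hp, hspan⟩

lemma IsPartialSplit.replace (h : IsPartialSplit G S C L)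
    (hL' : IsEarSeq G S (S ∪ innerVerts C) L₁) (hp : ∀ Q ∈ L₁, Q.IsProper)
    (hmem : ∀ w, w ∈ innerVerts L₁ ↔ w ∈ innerVerts L) : IsPartialSplit G S C L₁ :=
  ⟨h.isEarSeq_short, h.short, h.ends_mem, hL', hp, fun w => by grind [h.spanning w, hmem w]⟩

lemma IsPartialSplit.set_aside (h : IsPartialSplit G S C (P :: L)) (hshort : P.inner.length < 3)
    (hfree : ∀ Q ∈ L, Q.a ∉ P.inner ∧ Q.b ∉ P.inner) : IsPartialSplit G S (C ++ [P]) L where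
  isEarSeq_short :=
    isEarSeq_concat.2 ⟨h.isEarSeq_short, h.isEarSeq.1.mono Set.subset_union_left subset_rfl⟩
  short := by grind [h.short, h.isProper]
  ends_mem := by grind [h.ends_mem, h.isEarSeq.1.a_mem, h.isEarSeq.1.b_mem]
  isEarSeq := (h.isEarSeq.2.of_ends_notMem hfree).mono subset_rfl (by grind)
  isProper := by grind [h.isProper]
  spanning w := by grind [h.spanning w]

lemma IsPartialSplit.of_cons (h : IsPartialSplit G S C (P :: L)) :
    IsPartialSplit G (S ∪ P.innerSet) C L where
  isEarSeq_short := by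
    have hP := h.isEarSeq.1.notMem
    exact (h.isEarSeq_short.union_right (X := P.innerSet) (by grind)).mono (by grind) subset_rfl
  short := h.short
  ends_mem := by grind [h.ends_mem]
  isEarSeq := h.isEarSeq.2.mono subset_rfl (by grind)
  isProper := by grind [h.isProper]
  spanning w := by grind [h.spanning w]

lemma IsPartialSplit.exists_of_improvable (h : IsPartialSplit G S C L)
    (himp : Improvable G S (S ∪ innerVerts C) (innerVerts L) (numEven L) L.length) :
    (∃ L', L'.length < (C ++ L).length ∧ numEven L' ≤ numEven (C ++ L) ∧
      IsPartialSplit G S [] L') ∨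
    ∃ P L', 3 ≤ P.inner.length ∧ (P :: L').length ≤ L.length ∧ numEven (P :: L') ≤ numEven L ∧
      IsPartialSplit G S C (P :: L') := by
  rcases himp with ⟨n, hn, L', hL', hp, hX, he, hlen⟩ |
    ⟨P, Y, e, n, hP, hne, hlong, ⟨L', hL', hp, rfl, he, hlen⟩, hmem, hE, hN⟩
  · refine .inl ⟨C ++ L', by grind, by grind, (isEarSeq_append.2 ⟨h.isEarSeq_short, hL'⟩)
      |>.isPartialSplit (by grind [h.short]) fun w => ?_⟩
    grind [h.spanning w, Set.ext_iff.1 hX w]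
  · have hPne : P.IsProper := ⟨hne, by grind⟩
    exact .inr ⟨P, L', hlong, by grind, by grind,
      h.replace ⟨hP, hL'⟩ (by grind) fun w => by grind [hmem w]⟩

theorem IsPartialSplit.exists_isPendantSplit
    (hdeg : ∀ u x v : V, ∃ z, G.Adj u z ∧ z ≠ x ∧ z ≠ v) (h : IsPartialSplit G S C L) :
    ∃ A C', IsPendantSplit G S A C' ∧ numEven (A ++ C') ≤ numEven (C ++ L) := by
  induction hn : (C ++ L).length using Nat.strong_induction_on generalizing S C L with
  | _ n ih =>
  have of_long : ∀ {C P L'}, IsPartialSplit G S C (P :: L') → 3 ≤ P.inner.length →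
      (C ++ P :: L').length ≤ n → ∃ A C', IsPendantSplit G S A C' ∧
        numEven (A ++ C') ≤ numEven (C ++ P :: L') := by
    intro C P L' h' hlong hlen
    obtain ⟨A, C', hAC, he⟩ := ih _ (by grind) h'.of_cons rfl
    exact ⟨P :: A, C', hAC.cons (h'.isEarSeq.1.mono subset_rfl Set.subset_union_left)
      (h'.isProper P (by simp)).1 hlong, by grind⟩
  induction L generalizing C with
  | nil => exact ⟨[], C, h.isPendantSplit, by simp⟩
  | cons P L ihL =>
    by_cases hlong : 3 ≤ P.inner.length
    · exact of_long h hlong hn.le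
    by_cases htouch : ∃ Q ∈ L, Q.a ∈ P.inner ∨ Q.b ∈ P.inner
    · rcases h.exists_of_improvable (h.isEarSeq.improvable hdeg Set.subset_union_left h.isProper
        (by omega) (fun w => by grind [h.spanning w]) htouch) with
        ⟨L', hlen, he, h'⟩ | ⟨P', L', hlong', hlen, he, h'⟩
      · obtain ⟨A, C', hAC, he'⟩ := ih _ (hn ▸ hlen) h' rfl
        exact ⟨A, C', hAC, he'.trans he⟩
      · obtain ⟨A, C', hAC, he'⟩ := of_long h' hlong' (by grind)
        exact ⟨A, C', hAC, by grind⟩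
    · obtain ⟨A, C', hAC, he⟩ := ihL (h.set_aside (by omega) (by grind)) (by grind)
      exact ⟨A, C', hAC, by grind⟩

end PendantSplit

section FirstCycle

variable {r p q : V} {l : List V}

/-- The ear `Q` and the two edges of the triangle that avoid the edge between its ends form a longer
cycle through the same vertices. -/
lemma IsEar.exists_closed_of_triangle (hT : IsEar G {r} {r} ⟨r, [p, q], r⟩)
    (hQ : IsEar G {r, p, q} {r, p, q} Q) (hne : Q.a ≠ Q.b) :
    ∃ a l, IsEar G {a} {a} ⟨a, l, a⟩ ∧ l.length = Q.inner.length + 2 ∧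
      ∀ w, w = a ∨ w ∈ l ↔ w = r ∨ w ∈ [p, q] ∨ w ∈ Q.inner := by
  have hch := hT.isChain
  have hQav := hQ.notMem
  have ha := hQ.a_mem
  have hb := hQ.b_mem
  simp only [List.cons_append, List.nil_append, List.isChain_cons_cons] at hch
  have hadj : ∀ x ∈ ({r, p, q} : Set V), ∀ y ∈ ({r, p, q} : Set V), x ≠ y → G.Adj x y := by
    grind [hch.1.symm, hch.2.1.symm, hch.2.2.1.symm]
  obtain ⟨c, hc, hca, hcb⟩ : ∃ c ∈ ({r, p, q} : Set V), c ≠ Q.a ∧ c ≠ Q.b := by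
    grind [hch.1.ne, hch.2.1.ne, hch.2.2.1.ne]
  have hlink : IsLink G {Q.a} ⟨Q.a, Q.inner ++ [Q.b, c], Q.a⟩ :=
    (hQ.toIsLink.mono (by simpa using ha)).append
      ⟨by simpa using ⟨hadj _ hb _ hc hcb.symm, hadj _ hc _ ha hca⟩, by simp, by simpa using hca⟩
      (by simpa using hne.symm) (by grind [List.nodup_append, hQ.nodup])
  exact ⟨Q.a, Q.inner ++ [Q.b, c], ⟨hlink, rfl, rfl, by simp⟩, by simp, by grind⟩

lemma exists_long_closed_ear (hdeg : ∀ u x v : V, ∃ z, G.Adj u z ∧ z ≠ x ∧ z ≠ v)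
    (h : IsEarSeq G {r} {r} (⟨r, l, r⟩ :: L)) (hp : ∀ Q ∈ L, Q.IsProper)
    (hspan : ∀ w, w ∈ {r} ∪ innerVerts (⟨r, l, r⟩ :: L)) :
    ∃ r' l' L', IsEarSeq G {r'} {r'} (⟨r', l', r'⟩ :: L') ∧ 3 ≤ l'.length ∧
      (∀ Q ∈ L', Q.IsProper) ∧ (∀ w, w ∈ {r'} ∪ innerVerts (⟨r', l', r'⟩ :: L')) ∧
      numEven (⟨r', l', r'⟩ :: L') ≤ numEven (⟨r, l, r⟩ :: L) := by
  by_cases hlong : 3 ≤ l.length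
  · exact ⟨r, l, L, h, hlong, hp, hspan, le_rfl⟩
  have hl : 2 ≤ l.length := h.1.two_le_of_closed rfl
  obtain ⟨p, q, rfl⟩ := List.length_eq_two.1 (show l.length = 2 by omega)
  obtain - | ⟨Q, L⟩ := L
  · obtain ⟨z, hrz, hzp, hzq⟩ := hdeg r p q
    simpa [hrz.ne', hzp, hzq] using hspan z
  have hQ := hp Q (by simp)
  have hsub : {r} ∪ innerSet ⟨r, [p, q], r⟩ = {r, p, q} := by ext w; simp
  obtain ⟨a, l', hear, hlen, hmem⟩ :=
    h.1.exists_closed_of_triangle (h.2.1.mono hsub.subset hsub.superset) hQ.1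
  have hQl := List.length_pos_iff.2 hQ.2
  have hverts : {r} ∪ innerSet ⟨r, [p, q], r⟩ ∪ Q.innerSet = {a} ∪ innerSet ⟨a, l', a⟩ := by
    grind
  refine ⟨a, l', L, ⟨hear, h.2.2.mono hverts.subset hverts.superset⟩, by omega, by grind,
    fun w => ?_, by grind⟩
  grind [hspan w, Set.ext_iff.1 hverts w]

theorem exists_isPendantSplit_of_isEarSeq (hG : ∀ v : V, (G.induce ({v}ᶜ : Set V)).Connected)
    (hdeg : ∀ u x v : V, ∃ z, G.Adj u z ∧ z ≠ x ∧ z ≠ v) (h : IsEarSeq G {r} {r} (P :: L))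
    (hspan : ∀ w, w ∈ {r} ∪ innerVerts (P :: L)) :
    ∃ r' l A C, IsEar G {r'} {r'} ⟨r', l, r'⟩ ∧ 3 ≤ l.length ∧
      IsPendantSplit G ({r'} ∪ innerSet ⟨r', l, r'⟩) A C ∧
      numEven (⟨r', l, r'⟩ :: (A ++ C)) ≤ numEven (P :: L) := by
  obtain ⟨x, l, y⟩ := P
  obtain rfl : x = r := h.1.a_mem
  obtain rfl : y = x := h.1.b_mem
  have hl : 2 ≤ l.length := h.1.two_le_of_closed rfl
  have hne : (innerSet ⟨y, l, y⟩).Nonempty :=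
    List.exists_mem_of_length_pos (show 0 < l.length by omega)
  have hnt : ({y} ∪ innerSet ⟨y, l, y⟩).Nontrivial := by
    obtain ⟨w, hw⟩ := hne
    exact ⟨y, .inl rfl, w, .inr hw, fun e => h.1.notMem w hw e.symm⟩
  obtain ⟨-, L', hL', hp, hX, he, -⟩ :=
    h.2.exists_buildable hG hnt fun w => by grind [hspan w]
  obtain ⟨r, l', L₁, ⟨hear, hL₁⟩, hlong, hp₁, hspan₁, he₁⟩ :=
    exists_long_closed_ear hdeg (L := L') ⟨h.1, hL'⟩ hp
      fun w => by grind [hspan w, Set.ext_iff.1 hX w]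
  obtain ⟨A, C, hAC, he₂⟩ := (hL₁.isPartialSplit hp₁ fun w => by
    grind [hspan₁ w]).exists_isPendantSplit hdeg
  exact ⟨r, l', A, C, hear, hlong, hAC, by grind⟩

end FirstCycle

end Arc

namespace Ear

variable {G : SimpleGraph V} {S : Set V}

/-- An ear of `G`, forgetting that it is a walk of `G`. -/
def toArc (P : Ear G) : Arc V := ⟨P.a, P.walk.support.tail.dropLast, P.b⟩

lemma support_walk (P : Ear G) : P.walk.support = P.a :: P.toArc.inner ++ [P.b] := by
  have hne : P.walk.support.tail ≠ [] := by
    rw [← List.length_pos_iff, List.length_tail, Walk.length_support]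
    exact P.length_pos
  have htail := List.dropLast_append_getLast hne
  rw [List.getLast_tail, Walk.getLast_support] at htail
  rw [List.cons_append, toArc, htail]
  exact P.walk.cons_tail_support.symm

lemma length_walk (P : Ear G) : P.walk.length = P.toArc.inner.length + 1 := by
  have h := congrArg List.length P.support_walk
  simpa using h

lemma vertices_eq (P : Ear G) : P.vertices = P.endpoints ∪ P.toArc.innerSet := by
  ext v
  change v ∈ P.walk.support ↔ v ∈ ({P.a, P.b} : Set V) ∪ P.toArc.innerSet
  grind [P.support_walk]

lemma isEar_toArc (P : Ear G) : Arc.IsEar G P.endpoints P.endpoints P.toArc := by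
  have hs := P.support_walk
  have hlen := P.length_walk
  have hnd : P.toArc.inner.Nodup ∧ P.a ∉ P.toArc.inner ∧ P.b ∉ P.toArc.inner ∧
      (P.a = P.b → 2 ≤ P.toArc.inner.length) := by
    rcases P.ear with ⟨hne, hpath⟩ | ⟨heq, hcycle⟩
    · grind [hpath.support_nodup, List.nodup_append]
    · have hthree := hcycle.three_le_length
      have hnodup := hcycle.support_nodup
      rw [Walk.support_copy, hs] at hnodup
      rw [Walk.length_copy] at hthree
      grind [List.nodup_append]
  exact ⟨⟨hs ▸ P.walk.isChain_adj_support, hnd.1, by grind [endpoints]⟩, .inl rfl, .inr rfl,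
    hnd.2.2.2⟩

lemma internal_eq (P : Ear G) : P.internal = P.toArc.innerSet := by
  rw [internal, vertices_eq, Set.union_sdiff_left, sdiff_eq_left, Set.disjoint_left]
  exact P.isEar_toArc.notMem

lemma isTrivial_iff (P : Ear G) : P.IsTrivial ↔ P.toArc.inner = [] := by
  rw [IsTrivial, length_walk, Nat.add_eq_right, List.length_eq_zero_iff]

lemma isEar_toArc_iff {P : Ear G} :
    Arc.IsEar G S S P.toArc ↔ P.endpoints ⊆ S ∧ P.internal ∩ S = ∅ := by
  rw [internal_eq, ← Set.disjoint_iff_inter_eq_empty, Set.disjoint_left, endpoints,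
    Set.insert_subset_iff, Set.singleton_subset_iff]
  exact ⟨fun h => ⟨⟨h.a_mem, h.b_mem⟩, h.notMem⟩, fun ⟨⟨ha, hb⟩, hS⟩ =>
    ⟨⟨P.isEar_toArc.isChain, P.isEar_toArc.nodup, hS⟩, ha, hb, P.isEar_toArc.two_le_of_closed⟩⟩

lemma exists_mem_inner_of_mem_edges (P : Ear G) (hP : P.toArc.inner ≠ []) {e : Sym2 V}
    (he : e ∈ P.edges) : ∃ v ∈ e, v ∈ P.toArc.inner := by
  induction e using Sym2.ind with
  | _ x y =>
  have hadj := P.walk.adj_of_mem_edges he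
  by_contra! hcon
  have hx : x ∈ P.endpoints ∪ P.toArc.innerSet :=
    P.vertices_eq ▸ P.walk.fst_mem_support_of_mem_edges he
  have hy : y ∈ P.endpoints ∪ P.toArc.innerSet :=
    P.vertices_eq ▸ P.walk.snd_mem_support_of_mem_edges he
  have hends : P.a ≠ P.b ∧ s(x, y) = s(P.a, P.b) := by
    grind [endpoints, hadj.ne, hcon x (by simp), hcon y (by simp)]
  rcases P.ear with ⟨-, hpath⟩ | ⟨heq, -⟩
  · exact hP (P.isTrivial_iff.1 (hpath.length_eq_one_of_mem_edges (hends.2 ▸ he)))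
  · exact hends.1 heq

end Ear

namespace Arc

variable {G : SimpleGraph V} {S : Set V} {P : Arc V} {L : List (Arc V)}

lemma IsEar.exists_ear (h : IsEar G S S P) : ∃ E : Ear G, E.toArc = P := by
  obtain ⟨a, l, b⟩ := P
  obtain ⟨w, hw⟩ : ∃ w : G.Walk a b, w.support = a :: l ++ [b] :=
    ⟨(Walk.ofSupport _ (by simp) h.isChain).copy rfl (by simp),
      (Walk.support_copy ..).trans (Walk.support_ofSupport ..)⟩
  have hlen : w.length = l.length + 1 := by simpa using congrArg List.length hw
  have hav := h.notMem
  have hnd := h.nodup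
  have hal : a ∉ l := fun hmem => hav a hmem h.a_mem
  have hbl : b ∉ l := fun hmem => hav b hmem h.b_mem
  have hear : (a ≠ b ∧ w.IsPath) ∨ ∃ hab : a = b, (w.copy rfl hab.symm).IsCycle := by
    by_cases hab : a = b
    · subst hab
      have htwo : 2 ≤ l.length := h.two_le_of_closed rfl
      refine .inr ⟨rfl, ?_⟩
      rw [Walk.copy_rfl_rfl, Walk.isCycle_iff_isPath_tail_and_le_length, Walk.isPath_def,
        Walk.support_tail_of_not_nil _ (by rw [← Walk.length_eq_zero_iff]; omega), hw]
      grind [List.nodup_append]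
    · exact .inl ⟨hab, by grind [Walk.isPath_def, List.nodup_append]⟩
  exact ⟨⟨a, b, w, by omega, hear⟩, by simp [Ear.toArc, hw]⟩

lemma IsEarSeq.exists_map_toArc (h : IsEarSeq G S S L) :
    ∃ E : List (Ear G), E.map Ear.toArc = L := by
  induction L generalizing S with
  | nil => exact ⟨[], rfl⟩
  | cons P L ih =>
    obtain ⟨e, rfl⟩ := h.1.exists_ear
    obtain ⟨E, rfl⟩ := ih h.2
    exact ⟨e :: E, rfl⟩

lemma isEarSeq_iff_getElem {F : Set V} : IsEarSeq G S F L ↔ ∀ (i : ℕ) (hi : i < L.length),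
    IsEar G (S ∪ innerVerts (L.take i)) (F ∪ innerVerts (L.take i)) L[i] := by
  induction L generalizing S F with
  | nil => simp [IsEarSeq]
  | cons P L ih =>
    rw [IsEarSeq, ih]
    constructor
    · rintro ⟨hP, hL⟩ (_ | i) hi
      · simpa using hP
      · simpa [Set.union_assoc] using hL i (by simpa using hi)
    · intro h
      have hP : IsEar G (S ∪ innerVerts []) (F ∪ innerVerts []) P := h 0 (by simp)
      refine ⟨by simpa using hP, fun i hi => ?_⟩
      have hi' : IsEar G (S ∪ innerVerts (P :: L.take i)) (F ∪ innerVerts (P :: L.take i)) L[i] :=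
        h (i + 1) (by simpa using hi)
      simpa [Set.union_assoc] using hi'

end Arc

section Decomposition

open Arc

variable {G : SimpleGraph V} {r : V} {E : List (Ear G)}

lemma mem_innerVerts_take_map_toArc {i : ℕ} {w : V} :
    w ∈ innerVerts ((E.map Ear.toArc).take i) ↔
      ∃ j : Fin E.length, (j : ℕ) < i ∧ w ∈ (E.get j).internal := by
  simp only [innerVerts, Set.mem_ofPred_eq, Ear.internal_eq, mem_innerSet, ← List.map_take,
    List.mem_map, List.mem_take_iff_getElem, List.get_eq_getElem]
  constructor
  · rintro ⟨-, ⟨-, ⟨j, hj, rfl⟩, rfl⟩, hw⟩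
    exact ⟨⟨j, by omega⟩, by dsimp only; omega, hw⟩
  · rintro ⟨j, hj, hw⟩
    exact ⟨_, ⟨_, ⟨j, by omega, rfl⟩, rfl⟩, hw⟩

lemma union_innerVerts_take_subset_priorVerts (i : ℕ) :
    {r} ∪ innerVerts ((E.map Ear.toArc).take i) ⊆ priorVerts r E i := by
  rintro w (hw | hw)
  · exact .inl hw
  · obtain ⟨j, hj, hw⟩ := mem_innerVerts_take_map_toArc.1 hw
    exact .inr ⟨j, hj, hw.1⟩

lemma priorVerts_eq {i : ℕ} (h : ∀ j : Fin E.length, (j : ℕ) < i →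
      (E.get j).endpoints ⊆ priorVerts r E j) :
    priorVerts r E i = {r} ∪ innerVerts ((E.map Ear.toArc).take i) := by
  refine subset_antisymm ?_ (union_innerVerts_take_subset_priorVerts i)
  induction i using Nat.strong_induction_on with
  | _ i ih =>
  rintro w (rfl | ⟨j, hji, hw⟩)
  · exact .inl rfl
  rw [Ear.vertices_eq, ← Ear.internal_eq] at hw
  rcases hw with hw | hw
  · rcases ih j hji (fun k hk => h k (hk.trans hji)) (h j hji hw) with hw | hw
    · exact .inl hw
    · obtain ⟨k, hk, hw⟩ := mem_innerVerts_take_map_toArc.1 hw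
      exact .inr (mem_innerVerts_take_map_toArc.2 ⟨k, hk.trans hji, hw⟩)
  · exact .inr (mem_innerVerts_take_map_toArc.2 ⟨j, hji, hw⟩)

lemma isEarSeq_map_toArc_iff : IsEarSeq G {r} {r} (E.map Ear.toArc) ↔
    ∀ i : Fin E.length, (E.get i).endpoints ⊆ priorVerts r E i ∧
      (E.get i).internal ∩ priorVerts r E i = ∅ := by
  have hear : IsEarSeq G {r} {r} (E.map Ear.toArc) ↔ ∀ i : Fin E.length,
      (E.get i).endpoints ⊆ {r} ∪ innerVerts ((E.map Ear.toArc).take i) ∧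
      (E.get i).internal ∩ ({r} ∪ innerVerts ((E.map Ear.toArc).take i)) = ∅ := by
    simp [isEarSeq_iff_getElem, Ear.isEar_toArc_iff, Fin.forall_iff, -Set.singleton_union]
  rw [hear]
  constructor <;> intro h i
  · rw [priorVerts_eq fun j _ => (h j).1.trans (union_innerVerts_take_subset_priorVerts j)]
    exact h i
  · rw [← priorVerts_eq fun j _ => (h j).1]
    exact h i

lemma EarDecomp.isEarSeq (D : EarDecomp G) :
    IsEarSeq G {D.root} {D.root} (D.ears.map Ear.toArc) :=
  isEarSeq_map_toArc_iff.2 fun i => ⟨D.endpoints_sub i, D.internal_new i⟩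

lemma countP_even_length_eq_numEven (E : List (Ear G)) :
    (E.countP fun P => decide (Even P.walk.length)) = numEven (E.map Ear.toArc) := by
  induction E with
  | nil => rfl
  | cons P E ih =>
    rw [List.countP_cons, ih, List.map_cons, numEven_cons, Ear.length_walk]
    grind

lemma EarDecomp.mem_union_innerVerts (D : EarDecomp G) {w z : V} (h : G.Adj w z) :
    w ∈ {D.root} ∪ innerVerts (D.ears.map Ear.toArc) := by
  obtain ⟨i, hi, -⟩ := D.edge_cover s(w, z) h
  have hw : w ∈ (D.ears.get i).vertices := Walk.fst_mem_support_of_mem_edges _ hi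
  have hprior : w ∈ priorVerts D.root D.ears D.ears.length := .inr ⟨i, i.2, hw⟩
  rw [priorVerts_eq fun j _ => D.endpoints_sub j] at hprior
  rwa [List.take_of_length_le (by simp)] at hprior

end Decomposition

namespace Arc

variable {G : SimpleGraph V} {S : Set V}

section Existence

variable {r s t b : V}

lemma exists_prefix_support_of_mem (p : G.Walk t b) (ht : t ∉ S) (hb : b ∈ S) :
    ∃ l, ∃ z ∈ S, (∀ w ∈ t :: l, w ∉ S) ∧ t :: l ++ [z] <+: p.support := by
  induction p with
  | nil => exact absurd hb ht
  | @cons t y b _ p ih =>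
    by_cases hy : y ∈ S
    · exact ⟨[], y, hy, by simpa using ht, ⟨p.support.tail, by simp⟩⟩
    · obtain ⟨l, z, hz, hl, hpre⟩ := ih hy hb
      exact ⟨y :: l, z, hz, by grind, by simpa using hpre⟩

lemma exists_isLink_of_induce_compl_connected (hG : (G.induce ({s}ᶜ : Set V)).Connected)
    (hst : G.Adj s t) (ht : t ∉ S) (hb : b ∈ S) (hbs : b ≠ s) :
    ∃ l, ∃ z ∈ S, z ≠ s ∧ IsLink G ({s} ∪ S) ⟨s, t :: l, z⟩ := by
  obtain ⟨p, hp⟩ := hG.exists_isPath ⟨t, hst.ne'⟩ ⟨b, hbs⟩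
  let f := (Embedding.induce (G := G) ({s}ᶜ : Set V)).toHom
  obtain ⟨l, z, hz, hl, hpre⟩ := exists_prefix_support_of_mem (p.map f) ht hb
  have hs : ∀ w ∈ t :: l ++ [z], w ≠ s := by
    intro w hw
    obtain ⟨w, -, rfl⟩ := List.mem_map.1 (p.support_map f ▸ hpre.subset hw)
    exact w.2
  have hnd : (t :: l ++ [z]).Nodup :=
    (hp.map (f := f) Subtype.val_injective).support_nodup.sublist hpre.sublist
  exact ⟨l, z, hz, hs z (by simp), List.isChain_cons_cons.2
    ⟨hst, (p.map f).isChain_adj_support.prefix hpre⟩, hnd.of_append_left, by grind⟩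

lemma exists_spanning_isEarSeq [Finite V] (hG : ∀ v : V, (G.induce ({v}ᶜ : Set V)).Connected)
    (hS : S.Nontrivial) : ∃ L, IsEarSeq G S S L ∧ (∀ Q ∈ L, Q.inner ≠ []) ∧
      ∀ w, w ∈ S ∪ innerVerts L := by
  induction S using WellFoundedGT.induction with
  | _ S ih =>
  by_cases hall : ∀ w, w ∈ S
  · exact ⟨[], trivial, by simp, by simpa using hall⟩
  obtain ⟨w, hw⟩ := not_forall.1 hall
  have ⟨x, hx, y, hy, hxy⟩ := hS
  obtain ⟨s, t, hst, hs, -, ht, -⟩ :=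
    exists_adj_of_induce_compl_connected (hG y) hx hxy hw (by grind)
  obtain ⟨b, hb, hbs⟩ := hS.exists_ne s
  obtain ⟨l, z, hz, hzs, hlink⟩ := exists_isLink_of_induce_compl_connected (hG s) hst ht hb hbs
  have hssub : S ⊂ S ∪ innerSet ⟨s, t :: l, z⟩ :=
    ⟨Set.subset_union_left, fun hsub => ht (hsub (.inr (by simp)))⟩
  obtain ⟨L, hL, hne, hspan⟩ := ih _ hssub (hS.mono Set.subset_union_left)
  exact ⟨_ :: L, ⟨(hlink.mono Set.subset_union_right).isEar hs hz hzs.symm, hL⟩, by grind,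
    fun w => by grind [hspan w]⟩

lemma exists_closed_ear_of_adj_of_adj (hG : (G.induce ({r}ᶜ : Set V)).Connected)
    (hs : G.Adj r s) (ht : G.Adj r t) (hst : s ≠ t) :
    ∃ l, l ≠ [] ∧ IsEar G {r} {r} ⟨r, l, r⟩ := by
  obtain ⟨l, z, rfl, -, hlink⟩ :=
    exists_isLink_of_induce_compl_connected (S := {t}) hG hs hst rfl ht.ne'
  have hl := hlink.notMem
  have hclosed : IsLink G {r} ⟨r, s :: l ++ [z], r⟩ :=
    (hlink.mono Set.subset_union_left).append ⟨by simpa using ht.symm, by simp, by simp⟩ ht.ne'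
      (by grind [List.nodup_append, hlink.nodup])
  exact ⟨s :: l ++ [z], by simp, hclosed, rfl, rfl, by simp⟩

end Existence

end Arc

section Decomposition

open Arc

variable {G : SimpleGraph V} {r : V} {S : Set V} {E : List (Ear G)}

lemma pairwise_disjoint_edges (h : IsEarSeq G S S (E.map Ear.toArc))
    (hE : ∀ P ∈ E, P.toArc.inner ≠ []) : E.Pairwise fun P Q => P.edges.Disjoint Q.edges := by
  induction E generalizing S with
  | nil => exact .nil
  | cons P E ih =>
    refine .cons (fun Q hQ e heP heQ => ?_) (ih h.2 (by grind))
    obtain ⟨v, hve, hvQ⟩ := Q.exists_mem_inner_of_mem_edges (hE Q (by simp [hQ])) heQ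
    have hvP : v ∈ P.endpoints ∪ P.toArc.innerSet :=
      P.vertices_eq ▸ P.walk.mem_support_of_mem_edges heP hve
    refine h.2.notMem v ⟨_, List.mem_map_of_mem hQ, hvQ⟩ (hvP.imp_left ?_)
    rintro (rfl | rfl)
    exacts [h.1.a_mem, h.1.b_mem]

lemma isEarSeq_map_toArc_of_isTrivial (hE : ∀ P ∈ E, P.IsTrivial) (hS : ∀ w, w ∈ S) :
    IsEarSeq G S S (E.map Ear.toArc) := by
  induction E generalizing S with
  | nil => trivial
  | cons P E ih =>
    have hP : P.toArc.inner = [] := P.isTrivial_iff.1 (hE P (by simp))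
    refine ⟨Ear.isEar_toArc_iff.2 ⟨fun w _ => hS w, ?_⟩, ih (by grind) fun w => .inl (hS w)⟩
    simp [Ear.internal_eq, innerSet, hP]

lemma exists_isTrivial_edges_eq {e : Sym2 V} (he : e ∈ G.edgeSet) :
    ∃ P : Ear G, P.IsTrivial ∧ P.edges = [e] := by
  induction e using Sym2.ind with
  | _ x y => exact ⟨trivialEar G he, rfl, rfl⟩

lemma exists_trivial_ears [Finite V] {U : Set (Sym2 V)} (hU : U ⊆ G.edgeSet) :
    ∃ T : List (Ear G), (∀ P ∈ T, P.IsTrivial) ∧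
      T.Pairwise (fun P Q => P.edges.Disjoint Q.edges) ∧
      ∀ e, (∃ P ∈ T, e ∈ P.edges) ↔ e ∈ U := by
  choose t htriv hedges using fun e : U => exists_isTrivial_edges_eq (hU e.2)
  have := Fintype.ofFinite U
  refine ⟨Finset.univ.toList.map t, List.forall_mem_map.2 fun e _ => htriv e,
    List.pairwise_map.2 ?_, ?_⟩
  · refine (Finset.nodup_toList _).imp fun hne => ?_
    simpa [hedges, Subtype.ext_iff] using Ne.symm hne
  · simp [hedges]

lemma exists_ears_eq (h : IsEarSeq G {r} {r} (E.map Ear.toArc))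
    (hdisj : E.Pairwise fun P Q => P.edges.Disjoint Q.edges)
    (hcover : ∀ e ∈ G.edgeSet, ∃ P ∈ E, e ∈ P.edges) : ∃ D : EarDecomp G, D.ears = E := by
  have hE := isEarSeq_map_toArc_iff.1 h
  refine ⟨⟨r, E, fun i => (hE i).1, fun i => (hE i).2, fun e he => ?_⟩, rfl⟩
  obtain ⟨P, hP, heP⟩ := hcover e he
  obtain ⟨i, rfl⟩ := List.get_of_mem hP
  refine ⟨i, heP, fun j hj => ?_⟩
  rw [List.pairwise_iff_get] at hdisj
  rcases lt_trichotomy j i with hji | rfl | hij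
  · exact (hdisj j i hji hj heP).elim
  · rfl
  · exact (hdisj i j hij heP hj).elim

lemma exists_ears_eq_append_of_isEarSeq [Finite V] {L : List (Arc V)} (h : IsEarSeq G {r} {r} L)
    (hL : ∀ P ∈ L, P.inner ≠ []) (hspan : ∀ w, w ∈ {r} ∪ innerVerts L) :
    ∃ (D : EarDecomp G) (E T : List (Ear G)), D.ears = E ++ T ∧ E.map Ear.toArc = L ∧
      ∀ P ∈ T, P.IsTrivial := by
  obtain ⟨E, rfl⟩ := h.exists_map_toArc
  obtain ⟨T, htriv, hdisj, hT⟩ := exists_trivial_ears (G := G)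
    (U := {e ∈ G.edgeSet | ∀ P ∈ E, e ∉ P.edges}) (Set.sep_subset ..)
  have hseq : IsEarSeq G {r} {r} ((E ++ T).map Ear.toArc) := by
    rw [List.map_append]
    exact isEarSeq_append.2 ⟨h, isEarSeq_map_toArc_of_isTrivial htriv hspan⟩
  have hdisjET : (E ++ T).Pairwise fun P Q => P.edges.Disjoint Q.edges :=
    List.pairwise_append.2 ⟨pairwise_disjoint_edges h fun P hP => hL _ (List.mem_map_of_mem hP),
      hdisj, fun P hP Q hQ e heP heQ => ((hT e).1 ⟨Q, hQ, heQ⟩).2 P hP heP⟩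
  obtain ⟨D, hD⟩ := exists_ears_eq hseq hdisjET fun e he => by
    by_cases hE : ∃ P ∈ E, e ∈ P.edges
    · grind
    · obtain ⟨P, hP, heP⟩ := (hT e).2 ⟨he, by grind⟩
      exact ⟨P, List.mem_append_right _ hP, heP⟩
  exact ⟨D, E, T, hD, rfl, htriv⟩

lemma nonempty_earDecomp [Finite V] [Nonempty V]
    (hG : ∀ v : V, (G.induce ({v}ᶜ : Set V)).Connected)
    (hdeg : ∀ u x v : V, ∃ z, G.Adj u z ∧ z ≠ x ∧ z ≠ v) : Nonempty (EarDecomp G) := by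
  obtain ⟨r⟩ := ‹Nonempty V›
  obtain ⟨s, hs, -⟩ := hdeg r r r
  obtain ⟨t, ht, hts, -⟩ := hdeg r s s
  obtain ⟨l, hl, hear⟩ := exists_closed_ear_of_adj_of_adj (hG r) hs ht hts.symm
  obtain ⟨v, hv⟩ := List.exists_mem_of_ne_nil l hl
  obtain ⟨L, hL, hne, hspan⟩ := exists_spanning_isEarSeq (S := {r} ∪ innerSet ⟨r, l, r⟩) hG
    ⟨r, .inl rfl, v, .inr hv, fun h => hear.notMem v hv h.symm⟩
  obtain ⟨D, -⟩ := exists_ears_eq_append_of_isEarSeq (L := ⟨r, l, r⟩ :: L) ⟨hear, hL⟩ (by grind)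
    fun w => by grind [hspan w]
  exact ⟨D⟩

end Decomposition

section Pendant

open Arc

variable {G : SimpleGraph V} {D : EarDecomp G}

lemma Arc.IsPendantSplit.ends_mem_of_mem_append {S : Set V} {A C : List (Arc V)} {Q : Arc V}
    (h : IsPendantSplit G S A C) (hQ : Q ∈ A ++ C) :
    Q.a ∈ S ∪ innerVerts A ∧ Q.b ∈ S ∪ innerVerts A :=
  (List.mem_append.1 hQ).elim (isEarSeq_append.1 h.isEarSeq).1.ends_mem (h.ends_mem Q)

lemma Arc.IsPendantSplit.isProper {S : Set V} {A C : List (Arc V)}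
    (h : IsPendantSplit G S A C) : ∀ Q ∈ A ++ C, Q.IsProper := by
  grind [IsProper, h.long, h.short]

lemma Ear.IsTrivial.isOpen {P : Ear G} (h : P.IsTrivial) : P.IsOpen := fun hab => by
  simpa [P.isTrivial_iff.1 h] using P.isEar_toArc.two_le_of_closed hab

lemma numEven_map_toArc_of_isTrivial {T : List (Ear G)} (hT : ∀ P ∈ T, P.IsTrivial) :
    numEven (T.map Ear.toArc) = 0 := by
  induction T with
  | nil => rfl
  | cons P T ih => grind [P.isTrivial_iff]

lemma EarDecomp.isOpen_of_ears_eq_cons {e : Ear G} {E : List (Ear G)} (hD : D.ears = e :: E)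
    (hE : ∀ P ∈ E, P.IsOpen) : D.IsOpen := by
  obtain ⟨r, ears, _, _, _⟩ := D
  obtain rfl : ears = e :: E := hD
  rintro ⟨_ | i, hi⟩ h1
  · exact absurd h1 (by simp)
  · exact hE _ (List.getElem_mem _)

lemma EarDecomp.isPendant_of_isShort {Z : Set V}
    (hends : ∀ P ∈ D.ears, ¬P.IsTrivial → P.a ∈ Z ∧ P.b ∈ Z)
    (hshort : ∀ P ∈ D.ears, P.IsShort → ∀ w ∈ P.internal, w ∉ Z) (i : Fin D.ears.length)
    (hi : (D.ears.get i).IsShort) : D.IsPendant i := by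
  have hnew := hshort _ (List.get_mem ..) hi
  refine ⟨fun htriv => ?_, fun j _ hj => ?_⟩
  · simp only [Ear.IsShort, Ear.IsTrivial] at hi htriv
    omega
  · have hZ := hends _ (List.get_mem ..) hj
    exact ⟨fun ha => hnew _ ha hZ.1, fun hb => hnew _ hb hZ.2⟩

lemma EarDecomp.isPendant_of_isPendantSplit {r : V} {l : List V} {A C : List (Arc V)}
    (hlong : 3 ≤ l.length) (h : IsPendantSplit G ({r} ∪ innerSet ⟨r, l, r⟩) A C)
    (hD : ∀ P ∈ D.ears, P.toArc = ⟨r, l, r⟩ ∨ P.toArc ∈ A ++ C ∨ P.IsTrivial)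
    (i : Fin D.ears.length) (hi : (D.ears.get i).IsShort) : D.IsPendant i := by
  refine isPendant_of_isShort (Z := {r} ∪ innerSet ⟨r, l, r⟩ ∪ innerVerts A)
    (fun P hP htriv => ?_) (fun P hP hshort w hw => ?_) i hi
  · rcases hD P hP with hP | hP | hP
    · exact ⟨.inl (.inl (congrArg Arc.a hP)), .inl (.inl (congrArg Arc.b hP))⟩
    · exact h.ends_mem_of_mem_append hP
    · exact absurd hP htriv
  · rw [Ear.IsShort, P.length_walk] at hshort
    rw [P.internal_eq] at hw
    have hPC : P.toArc ∈ C := by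
      rcases hD P hP with hP | hP | hP
      · simp only [hP] at hshort
        omega
      · exact (List.mem_append.1 hP).resolve_left fun hA => by grind [h.long P.toArc hA]
      · simp [P.isTrivial_iff.1 hP] at hshort
    exact (isEarSeq_append.1 h.isEarSeq).2.notMem w ⟨_, hPC, hw⟩

theorem exists_earDecomp_of_isPendantSplit [Finite V] {r : V} {l : List V} {A C : List (Arc V)}
    (hear : IsEar G {r} {r} ⟨r, l, r⟩) (hlong : 3 ≤ l.length)
    (h : IsPendantSplit G ({r} ∪ innerSet ⟨r, l, r⟩) A C) :
    ∃ D : EarDecomp G, D.IsOpen ∧ D.evenEars = numEven (⟨r, l, r⟩ :: (A ++ C)) ∧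
      ∀ i : Fin D.ears.length, (D.ears.get i).IsShort → D.IsPendant i := by
  obtain ⟨D, E, T, hD, hE, hT⟩ :=
    exists_ears_eq_append_of_isEarSeq (L := ⟨r, l, r⟩ :: (A ++ C)) ⟨hear, h.isEarSeq⟩
      (List.forall_mem_cons.2 ⟨by grind, fun Q hQ => (h.isProper Q hQ).2⟩)
      fun w => by grind [h.spanning w]
  obtain ⟨e, E, rfl, he, hE⟩ := List.map_eq_cons_iff.1 hE
  have hmem : ∀ P ∈ E, P.toArc ∈ A ++ C := fun P hP => hE ▸ List.mem_map_of_mem hP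
  refine ⟨D, D.isOpen_of_ears_eq_cons hD fun P hP => ?_, ?_,
    D.isPendant_of_isPendantSplit hlong h (by grind)⟩
  · exact (List.mem_append.1 hP).elim (fun hP => (h.isProper _ (hmem P hP)).1)
      fun hP => (hT P hP).isOpen
  · rw [EarDecomp.evenEars, hD, countP_even_length_eq_numEven, List.map_append, numEven_append,
      numEven_map_toArc_of_isTrivial hT, List.map_cons, he, hE, add_zero]

lemma EarDecomp.exists_open_evenEars_le (D : EarDecomp G) [Finite V]
    (hG : ∀ v : V, (G.induce ({v}ᶜ : Set V)).Connected)
    (hdeg : ∀ u x v : V, ∃ z, G.Adj u z ∧ z ≠ x ∧ z ≠ v) :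
    ∃ D' : EarDecomp G, D'.IsOpen ∧ D'.evenEars ≤ D.evenEars ∧
      ∀ i : Fin D'.ears.length, (D'.ears.get i).IsShort → D'.IsPendant i := by
  have hseq := D.isEarSeq
  have hspan : ∀ w, w ∈ {D.root} ∪ innerVerts (D.ears.map Ear.toArc) := fun w => by
    obtain ⟨z, hz, -⟩ := hdeg w w w
    exact D.mem_union_innerVerts hz
  have heven : D.evenEars = numEven (D.ears.map Ear.toArc) := countP_even_length_eq_numEven _
  rcases hL : D.ears.map Ear.toArc with _ | ⟨P, L⟩
  · obtain ⟨z, hz, -⟩ := hdeg D.root D.root D.root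
    simpa [hL, hz.ne'] using hspan z
  rw [hL] at hseq hspan heven
  obtain ⟨r, l, A, C, hear, hlong, hsplit, hle⟩ :=
    exists_isPendantSplit_of_isEarSeq hG hdeg hseq hspan
  obtain ⟨D', hopen, heven', hpendant⟩ := exists_earDecomp_of_isPendantSplit hear hlong hsplit
  exact ⟨D', hopen, by omega, hpendant⟩

end Pendant

lemma exists_adj_ne_ne_of_three_le_degree {V : Type*} {G : SimpleGraph V} {u : V}
    [Fintype (G.neighborSet u)] (hu : 3 ≤ G.degree u) (x v : V) :
    ∃ z, G.Adj u z ∧ z ≠ x ∧ z ≠ v := by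
  classical
  obtain ⟨z, hz, hz'⟩ := Finset.exists_mem_notMem_of_card_lt_card
    (show ({x, v} : Finset V).card < (G.neighborFinset u).card from
      Finset.card_le_two.trans_lt hu)
  exact ⟨z, by simpa using hz, by grind⟩

/-- Theorem 1. Every 2-vertex-connected simple graph of minimum degree
at least `3` has an open ear-decomposition with exactly `φ(G)` even ears in which every
short ear is pendant. -/
theorem statement_1 {V : Type*} [Fintype V] [DecidableEq V] (G : SimpleGraph V)
    [DecidableRel G.Adj]
    (h2 : TwoVertexConnected G) (hdeg : ∀ v : V, 3 ≤ G.degree v) :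
    ∃ D : EarDecomp G, D.IsOpen ∧ D.evenEars = phi G ∧
      ∀ i : Fin D.ears.length, (D.ears.get i).IsShort → D.IsPendant i := by
  have hdeg' (u x v : V) : ∃ z, G.Adj u z ∧ z ≠ x ∧ z ≠ v :=
    exists_adj_ne_ne_of_three_le_degree (hdeg u) x v
  have : Nonempty V := (Nat.card_pos_iff.1 (by have := h2.1; omega)).1
  obtain ⟨D₀⟩ := nonempty_earDecomp h2.2 hdeg'
  obtain ⟨D₁, hD₁⟩ : ∃ D : EarDecomp G, D.evenEars = phi G :=
    Nat.sInf_mem (s := {n | ∃ D : EarDecomp G, D.evenEars = n}) ⟨_, D₀, rfl⟩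
  obtain ⟨D, hopen, hle, hpendant⟩ := D₁.exists_open_evenEars_le h2.2 hdeg'
  exact ⟨D, hopen, (hle.trans_eq hD₁).antisymm (Nat.sInf_le ⟨D, rfl⟩), hpendant⟩
end

section
/- Every 2-vertex-connected simple graph G with minimum degree at least 3 has an open ear-decomposition with exactly φ(G) even ears whose first ear P1 (the unique closed ear) is long, i.e., has at least 4 edges. -/
open SimpleGraph

variable {V : Type*}

/-!
Start from an ear-decomposition with `φ(G)` even ears. Its first ear is closed; keep it and let
`U` be its vertex set. Colour the vertices of `U` with distinct colours, and extend the colouring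
along every ear whose two ends have the same colour. If no later ear ever has ends of different
colours, then the colouring is constant on the edges outside `U`, and a vertex of `U` whose colour
occurs elsewhere is a cut vertex. So some later ear `Q` has ends of different colours, and it can
be moved to the front: to pass a preceding ear `P` with ends of equal colour, either swap `P` and
`Q`, or, if `Q` starts at an internal vertex of `P`, split `P` there into two paths, prepend one
of them to `Q` and leave the other one behind. Choosing the odd half to stay behind whenever there
is one, the number of even ears does not increase. An ear whose ends have different colours in `U`
is open, and iterating makes all ears but the first one open.

If the first ear is a triangle, there is a second ear `Q`, with ends `x ≠ y` on the triangle
`xyz`. Replacing the two by the closed ear `yzx` followed by `Q` and the trivial ear `xy`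
preserves parities.
-/

variable {G : SimpleGraph V}

lemma isPath_append {u v w : V} {p : G.Walk u v} {q : G.Walk v w} (hp : p.IsPath) (hq : q.IsPath)
    (hpq : ∀ x ∈ p.support, x ∈ q.support → x = v) : (p.append q).IsPath := by
  have hv : v ∉ q.support.tail := (List.nodup_cons.1 (q.cons_tail_support ▸ hq.support_nodup)).1
  rw [Walk.isPath_def, Walk.support_append, List.nodup_append']
  refine ⟨hp.support_nodup, hq.support_nodup.tail, fun x hxp hxq => hv ?_⟩
  have hxv : x = v := hpq x hxp (List.mem_of_mem_tail hxq)
  exact hxv ▸ hxq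

lemma isCycle_cons_cons {x y z : V} {p : G.Walk x y} (hp : p.IsPath) (hxy : x ≠ y)
    (hyz : G.Adj y z) (hzx : G.Adj z x) (hz : z ∉ p.support) :
    (Walk.cons hyz (Walk.cons hzx p)).IsCycle := by
  rw [Walk.cons_isCycle_iff, Walk.cons_isPath_iff, Walk.edges_cons, List.mem_cons, not_or]
  refine ⟨⟨hp, hz⟩, ?_, fun he => hz (p.snd_mem_support_of_mem_edges he)⟩
  rw [Sym2.eq_swap, Sym2.congr_right]
  exact hxy.symm

namespace TwoVertexConnected

lemma finite (h2 : TwoVertexConnected G) : Finite V :=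
  Nat.finite_of_card_ne_zero (by have := h2.1; lia)

lemma nonempty (h2 : TwoVertexConnected G) : Nonempty V :=
  (Nat.card_pos_iff.1 (by have := h2.1; lia)).1

lemma exists_ne_ne (h2 : TwoVertexConnected G) (u v : V) : ∃ x, x ≠ u ∧ x ≠ v := by
  have := h2.finite
  refine ENat.exists_ne_ne_of_three_le ?_ u v
  rw [ENat.card_eq_coe_natCard]
  exact_mod_cast h2.1

lemma exists_walk_notMem_support (h2 : TwoVertexConnected G) {u v x : V} (hu : u ≠ x)
    (hv : v ≠ x) : ∃ p : G.Walk u v, x ∉ p.support := by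
  obtain ⟨p⟩ := (h2.2 x).preconnected ⟨u, hu⟩ ⟨v, hv⟩
  refine ⟨p.map (Embedding.induce _).toHom, fun hx => ?_⟩
  obtain ⟨y, -, hyx⟩ := List.mem_map.1 (p.support_map _ ▸ hx)
  exact y.2 hyx

lemma preconnected (h2 : TwoVertexConnected G) : G.Preconnected := fun u v => by
  obtain ⟨x, hxu, hxv⟩ := h2.exists_ne_ne u v
  obtain ⟨p, -⟩ := h2.exists_walk_notMem_support hxu.symm hxv.symm
  exact ⟨p⟩

lemma exists_adj (h2 : TwoVertexConnected G) (v : V) : ∃ w, G.Adj v w := by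
  obtain ⟨x, hxv, -⟩ := h2.exists_ne_ne v v
  have : Nontrivial V := ⟨x, v, hxv⟩
  exact h2.preconnected.exists_adj_of_nontrivial v

lemma not_isBridge (h2 : TwoVertexConnected G) {u v : V} (huv : u ≠ v) :
    ¬ G.IsBridge s(u, v) := by
  obtain ⟨x, hxu, hxv⟩ := h2.exists_ne_ne u v
  obtain ⟨p, hp⟩ := h2.exists_walk_notMem_support huv hxv
  obtain ⟨q, hq⟩ := h2.exists_walk_notMem_support hxu huv.symm
  rw [isBridge_iff_forall_walk_mem_edges, not_forall]
  refine ⟨p.append q, ?_⟩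
  rw [Walk.edges_append, List.mem_append, not_or]
  exact ⟨fun h => hp (p.snd_mem_support_of_mem_edges h),
    fun h => hq (q.fst_mem_support_of_mem_edges h)⟩

lemma injective_of_eqOn_id (h2 : TwoVertexConnected G) {U : Set V} (hU : U.Nontrivial)
    {f : V → V} (hf : Set.EqOn f id U) (hadj : ∀ u v, G.Adj u v → f u = f v ∨ u ∈ U ∧ v ∈ U) :
    Function.Injective f := by
  intro u v hfuv
  by_contra huv
  obtain ⟨x, y, hyx, hfy⟩ : ∃ x y, y ≠ x ∧ f y = x := by grind
  obtain ⟨z, hzU, hzx⟩ := hU.exists_ne x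
  -- Leaving the fibre of `f` over `x` along an edge is possible only at `x` itself.
  obtain ⟨p, hp⟩ := h2.exists_walk_notMem_support hyx hzx
  obtain ⟨d, hd, hfst, hsnd⟩ := p.exists_boundary_dart {v | f v = x} hfy
    (fun hfz => hzx ((hf hzU).symm.trans hfz))
  rcases hadj _ _ d.adj with heq | ⟨hdU, -⟩
  · exact hsnd (heq.symm.trans hfst)
  · exact hp ((hf hdU).symm.trans hfst ▸ p.dart_fst_mem_support_of_mem_darts hd)

end TwoVertexConnected

namespace Ear

variable {P Q : Ear G} {U : Set V}

/-- The open ear given by a path with distinct endpoints. -/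
def ofPath {a b : V} (p : G.Walk a b) (hp : p.IsPath) (hab : a ≠ b) : Ear G where
  a := a
  b := b
  walk := p
  length_pos := Walk.not_nil_iff_lt_length.1 (Walk.not_nil_of_ne hab)
  ear := .inl ⟨hab, hp⟩

/-- The closed ear given by a cycle. -/
def ofCycle {a : V} (c : G.Walk a a) (hc : c.IsCycle) : Ear G where
  a := a
  b := a
  walk := c
  length_pos := by have := hc.three_le_length; lia
  ear := .inr ⟨rfl, hc⟩

@[elab_as_elim]
lemma path_cycle_cases {motive : Ear G → Prop}
    (path : ∀ {a b : V} (p : G.Walk a b) (hp : p.IsPath) (hab : a ≠ b), motive (ofPath p hp hab))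
    (cycle : ∀ {a : V} (c : G.Walk a a) (hc : c.IsCycle), motive (ofCycle c hc)) (P : Ear G) :
    motive P := by
  obtain ⟨a, b, p, -, ⟨hab, hp⟩ | ⟨hab, hp⟩⟩ := P
  · exact path p hp hab
  · obtain rfl : a = b := hab
    exact cycle p hp

/-- The same ear, traversed from its last vertex to its first one. -/
def reverse (P : Ear G) : Ear G where
  a := P.b
  b := P.a
  walk := P.walk.reverse
  length_pos := by simpa using P.length_pos
  ear := by
    cases P using path_cycle_cases with
    | path p hp hab => exact .inl ⟨hab.symm, hp.reverse⟩
    | cycle c hc => exact .inr ⟨rfl, hc.reverse⟩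

lemma vertices_reverse (P : Ear G) : P.reverse.vertices = P.vertices := by
  simp [vertices, reverse]

lemma endpoints_reverse (P : Ear G) : P.reverse.endpoints = P.endpoints :=
  Set.pair_comm _ _

lemma internal_reverse (P : Ear G) : P.reverse.internal = P.internal := by
  rw [internal, internal, vertices_reverse, endpoints_reverse]

lemma isPath_of_isOpen (hP : P.IsOpen) : P.walk.IsPath :=
  P.ear.elim And.right fun h => absurd h.1 hP

lemma three_le_length (hP : ¬ P.IsOpen) : 3 ≤ P.walk.length := by
  cases P using path_cycle_cases with
  | path p hp hab => exact absurd hab hP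
  | cycle c hc => exact hc.three_le_length

lemma edges_nodup (P : Ear G) : P.edges.Nodup := by
  cases P using path_cycle_cases with
  | path p hp hab => exact hp.isTrail.edges_nodup
  | cycle c hc => exact hc.isTrail.edges_nodup

lemma not_nil_walk (P : Ear G) : ¬ P.walk.Nil :=
  Walk.not_nil_iff_lt_length.2 P.length_pos

lemma mem_vertices_iff_exists_mem_edges {v : V} : v ∈ P.vertices ↔ ∃ e ∈ P.edges, v ∈ e :=
  Walk.mem_support_iff_exists_mem_edges_of_not_nil P.not_nil_walk

lemma nontrivial_vertices (P : Ear G) : P.vertices.Nontrivial :=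
  ⟨P.a, P.walk.start_mem_support, P.walk.snd, P.walk.getVert_mem_support 1,
    (P.walk.adj_snd P.not_nil_walk).ne⟩

lemma isPath_and_isPath_of_walk_eq_append {u : V} (hu : u ∈ P.internal) {L : G.Walk P.a u}
    {R : G.Walk u P.b} (hLR : P.walk = L.append R) : L.IsPath ∧ R.IsPath := by
  obtain ⟨hua, hub⟩ : u ≠ P.a ∧ u ≠ P.b := not_or.1 hu.2
  cases P using path_cycle_cases with
  | path p hp hab =>
    replace hp : (L.append R).IsPath := hLR ▸ hp
    exact ⟨hp.of_append_left, hp.of_append_right⟩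
  | cycle c hc =>
    replace hc : (L.append R).IsCycle := hLR ▸ hc
    exact ⟨hc.isPath_of_append_left (Walk.not_nil_of_ne hub),
      hc.isPath_of_append_right (Walk.not_nil_of_ne hua.symm)⟩

lemma eq_of_mem_support_of_walk_eq_append {u v : V} {L : G.Walk P.a u}
    {R : G.Walk u P.b} (hLR : P.walk = L.append R) (hvL : v ∈ L.support) (hvR : v ∈ R.support) :
    v = u ∨ v = P.a ∧ v = P.b := by
  cases P using path_cycle_cases with
  | path p hp hab =>
    replace hp : (L.append R).IsPath := hLR ▸ hp
    by_contra! hne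
    exact hp.ne_of_mem_support_of_append hne.1 hvL hvR rfl
  | cycle c hc =>
    replace hc : (L.append R).IsCycle := hLR ▸ hc
    have hdisj : L.support.tail.Disjoint R.support.tail :=
      List.disjoint_of_nodup_append (L.tail_support_append R ▸ hc.support_nodup)
    rcases L.mem_support_iff.1 hvL with rfl | hvL
    · exact .inr ⟨rfl, rfl⟩
    · exact .inl ((R.mem_support_iff.1 hvR).resolve_right (hdisj hvL))

/-- `P` can be the next ear of an ear-decomposition whose current vertex set is `U`. -/
def AttachesTo (P : Ear G) (U : Set V) : Prop := P.vertices ∩ U = P.endpoints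

lemma attachesTo_iff :
    P.AttachesTo U ↔ ∀ v, v ∈ P.walk.support ∧ v ∈ U ↔ v = P.a ∨ v = P.b :=
  Set.ext_iff

lemma attachesTo_iff_subset_and_inter_eq_empty :
    P.AttachesTo U ↔ P.endpoints ⊆ U ∧ P.internal ∩ U = ∅ := by
  have hends : P.endpoints ⊆ P.vertices := by
    rintro v (rfl | rfl)
    exacts [P.walk.start_mem_support, P.walk.end_mem_support]
  simp only [AttachesTo, internal, Set.ext_iff, Set.mem_inter_iff, Set.mem_sdiff,
    Set.mem_empty_iff_false]
  grind

lemma AttachesTo.reverse (hP : P.AttachesTo U) : P.reverse.AttachesTo U := by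
  rwa [AttachesTo, vertices_reverse, endpoints_reverse]

end Ear

/-! ### Sequences of ears -/

/-- The edges of a sequence of ears, with multiplicity. -/
def edgeList (l : List (Ear G)) : List (Sym2 V) := l.flatMap Ear.edges

/-- The number of even ears of a sequence of ears. -/
def evenCount (l : List (Ear G)) : ℕ := l.countP fun P => decide (Even P.walk.length)

/-- The vertices of a sequence of ears. -/
def vertexSet (l : List (Ear G)) : Set V := {v | ∃ P ∈ l, v ∈ P.vertices}

/-- The ears of `l` can be attached one after the other, starting from the vertex set `U`. -/
def IsEarSeq : Set V → List (Ear G) → Prop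
  | _, [] => True
  | U, P :: l => P.AttachesTo U ∧ IsEarSeq (U ∪ P.vertices) l

/-- `l'` arises from `l` by redistributing the edges over equally many ears, of which at most as
many are even. -/
structure IsRearrangement (l' l : List (Ear G)) : Prop where
  length_eq : l'.length = l.length
  edges_perm : (edgeList l').Perm (edgeList l)
  evenCount_le : evenCount l' ≤ evenCount l

variable {U : Set V} {l l₁ l₂ l₃ : List (Ear G)} {P : Ear G}

lemma edgeList_cons (P : Ear G) (l : List (Ear G)) : edgeList (P :: l) = P.edges ++ edgeList l :=
  List.flatMap_cons

lemma edgeList_append (l₁ l₂ : List (Ear G)) :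
    edgeList (l₁ ++ l₂) = edgeList l₁ ++ edgeList l₂ :=
  List.flatMap_append

lemma mem_edgeList {e : Sym2 V} : e ∈ edgeList l ↔ ∃ P ∈ l, e ∈ P.edges :=
  List.mem_flatMap

lemma mem_edgeList_or_mem_vertices {u v : V} (h : s(u, v) ∈ edgeList (P :: l)) :
    s(u, v) ∈ edgeList l ∨ u ∈ P.vertices ∧ v ∈ P.vertices := by
  rw [edgeList_cons, List.mem_append] at h
  exact h.symm.imp_right fun h =>
    ⟨P.walk.fst_mem_support_of_mem_edges h, P.walk.snd_mem_support_of_mem_edges h⟩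

lemma evenCount_append (l₁ l₂ : List (Ear G)) :
    evenCount (l₁ ++ l₂) = evenCount l₁ + evenCount l₂ :=
  List.countP_append

lemma vertexSet_nil : vertexSet ([] : List (Ear G)) = ∅ := by
  simp [vertexSet]

lemma vertexSet_cons (P : Ear G) (l : List (Ear G)) :
    vertexSet (P :: l) = P.vertices ∪ vertexSet l := by
  ext v
  simp [vertexSet]

lemma mem_vertexSet_iff_exists_mem_edgeList {v : V} :
    v ∈ vertexSet l ↔ ∃ e ∈ edgeList l, v ∈ e := by
  simp only [vertexSet, Set.mem_ofPred_eq, Ear.mem_vertices_iff_exists_mem_edges, mem_edgeList]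
  tauto

lemma vertexSet_eq_of_perm (h : (edgeList l₁).Perm (edgeList l₂)) :
    vertexSet l₁ = vertexSet l₂ := by
  ext v
  simp only [mem_vertexSet_iff_exists_mem_edgeList, h.mem_iff]

namespace IsRearrangement

lemma refl (l : List (Ear G)) : IsRearrangement l l :=
  ⟨rfl, .refl _, le_rfl⟩

lemma trans (h₁ : IsRearrangement l₁ l₂) (h₂ : IsRearrangement l₂ l₃) : IsRearrangement l₁ l₃ :=
  ⟨h₁.length_eq.trans h₂.length_eq, h₁.edges_perm.trans h₂.edges_perm,
    h₁.evenCount_le.trans h₂.evenCount_le⟩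

lemma append {l₁' l₂' : List (Ear G)} (h₁ : IsRearrangement l₁' l₁)
    (h₂ : IsRearrangement l₂' l₂) : IsRearrangement (l₁' ++ l₂') (l₁ ++ l₂) where
  length_eq := by rw [List.length_append, List.length_append, h₁.length_eq, h₂.length_eq]
  edges_perm := by simpa only [edgeList_append] using h₁.edges_perm.append h₂.edges_perm
  evenCount_le := by
    simpa only [evenCount_append] using add_le_add h₁.evenCount_le h₂.evenCount_le

lemma cons (P : Ear G) (h : IsRearrangement l₁ l₂) : IsRearrangement (P :: l₁) (P :: l₂) :=
  (refl [P]).append h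

lemma swap (P Q : Ear G) : IsRearrangement [Q, P] [P, Q] where
  length_eq := rfl
  edges_perm := (List.Perm.swap P Q []).flatMap_right _
  evenCount_le := ((List.Perm.swap P Q []).countP_eq _).le

end IsRearrangement

lemma isEarSeq_append :
    IsEarSeq U (l₁ ++ l₂) ↔ IsEarSeq U l₁ ∧ IsEarSeq (U ∪ vertexSet l₁) l₂ := by
  induction l₁ generalizing U with
  | nil => simp [IsEarSeq, vertexSet_nil]
  | cons P l₁ ih =>
    simp only [List.cons_append, IsEarSeq, ih, vertexSet_cons, Set.union_assoc, and_assoc]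

lemma IsEarSeq.replace_prefix (h : IsEarSeq U (l₁ ++ l₃)) (h₂ : IsEarSeq U l₂)
    (hperm : (edgeList l₂).Perm (edgeList l₁)) : IsEarSeq U (l₂ ++ l₃) :=
  isEarSeq_append.2 ⟨h₂, vertexSet_eq_of_perm hperm ▸ (isEarSeq_append.1 h).2⟩

lemma isEarSeq_iff_forall_attachesTo :
    IsEarSeq U l ↔ ∀ i : Fin l.length, (l.get i).AttachesTo (U ∪ vertexSet (l.take i)) := by
  induction l generalizing U with
  | nil => simp [IsEarSeq]
  | cons P l ih =>
    rw [IsEarSeq, ih]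
    simp [Fin.forall_fin_succ, vertexSet_nil, vertexSet_cons, Set.union_assoc]

lemma IsEarSeq.not_isOpen_head {r : V} (h : IsEarSeq {r} (P :: l)) : ¬ P.IsOpen := by
  have hends : ∀ v ∈ P.endpoints, v = r := fun v hv => (h.1.ge hv).2
  exact not_not.2 ((hends P.a (.inl rfl)).trans (hends P.b (.inr rfl)).symm)

lemma edgeList_nodup_iff :
    (edgeList l).Nodup ↔
      ∀ i j : Fin l.length, ∀ e ∈ (l.get i).edges, e ∈ (l.get j).edges → i = j := by
  have hnodup : ∀ P ∈ l, P.edges.Nodup := fun P _ => P.edges_nodup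
  rw [edgeList, List.nodup_flatMap, and_iff_right hnodup, List.pairwise_iff_get]
  refine ⟨fun h i j e hi hj => ?_, fun h i j hij e hi hj => hij.ne (h i j e hi hj)⟩
  by_contra hne
  rcases lt_or_gt_of_ne hne with hij | hji
  · exact h i j hij hi hj
  · exact h j i hji hj hi

lemma priorVerts_eq_union_vertexSet (r : V) (l : List (Ear G)) (i : ℕ) :
    priorVerts r l i = {r} ∪ vertexSet (l.take i) := by
  ext v
  simp only [priorVerts, List.get_eq_getElem, Fin.exists_iff, exists_and_left, Set.mem_insert_iff,
    Set.mem_ofPred_eq, vertexSet, List.mem_take_iff_getElem, lt_inf_iff, ↓existsAndEq, true_and,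
    Set.singleton_union]
  grind

namespace EarDecomp

lemma isEarSeq_s2 (D : EarDecomp G) : IsEarSeq {D.root} D.ears := by
  refine isEarSeq_iff_forall_attachesTo.2 fun i => ?_
  rw [Ear.attachesTo_iff_subset_and_inter_eq_empty, ← priorVerts_eq_union_vertexSet]
  exact ⟨D.endpoints_sub i, D.internal_new i⟩

lemma edgeList_ears_nodup (D : EarDecomp G) : (edgeList D.ears).Nodup :=
  edgeList_nodup_iff.2 fun i _ e hi hj =>
    (D.edge_cover e ((D.ears.get i).walk.edges_subset_edgeSet hi)).unique hi hj

lemma mem_edgeList_ears (D : EarDecomp G) {e : Sym2 V} (he : e ∈ G.edgeSet) :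
    e ∈ edgeList D.ears := by
  obtain ⟨i, hi, -⟩ := D.edge_cover e he
  exact mem_edgeList.2 ⟨_, D.ears.get_mem i, hi⟩

/-- The ear-decomposition given by a sequence of ears that starts at the root `r` and contains
every edge once. -/
def ofIsEarSeq {r : V} (h : IsEarSeq {r} l) (hnodup : (edgeList l).Nodup)
    (hcover : ∀ e ∈ G.edgeSet, e ∈ edgeList l) : EarDecomp G :=
  have hattach (i : Fin l.length) :
      (l.get i).endpoints ⊆ priorVerts r l i ∧ (l.get i).internal ∩ priorVerts r l i = ∅ := by
    rw [← Ear.attachesTo_iff_subset_and_inter_eq_empty, priorVerts_eq_union_vertexSet]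
    exact isEarSeq_iff_forall_attachesTo.1 h i
  { root := r
    ears := l
    endpoints_sub := fun i => (hattach i).1
    internal_new := fun i => (hattach i).2
    edge_cover := fun e he => by
      obtain ⟨P, hP, heP⟩ := mem_edgeList.1 (hcover e he)
      obtain ⟨i, rfl⟩ := List.get_of_mem hP
      exact ⟨i, heP, fun j hj => edgeList_nodup_iff.1 hnodup j i e hj heP⟩ }

end EarDecomp

/-! ### Existence of ear-decompositions -/

lemma Ear.AttachesTo.edges_eq_singleton (hP : P.AttachesTo U) {e : Sym2 V} (he : e ∈ P.edges)
    (heU : ∀ v ∈ e, v ∈ U) : P.edges = [e] := by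
  have hends : ∀ v ∈ e, v = P.a ∨ v = P.b := fun v hv =>
    (Ear.attachesTo_iff.1 hP v).1 ⟨Ear.mem_vertices_iff_exists_mem_edges.2 ⟨e, he, hv⟩, heU v hv⟩
  obtain ⟨rfl, hopen⟩ : e = s(P.a, P.b) ∧ P.IsOpen := by
    induction e with
    | _ x y =>
      have hxy : x ≠ y := (P.walk.adj_of_mem_edges he).ne
      rcases hends x (Sym2.mem_mk_left x y) with rfl | rfl <;>
        rcases hends y (Sym2.mem_mk_right _ y) with rfl | rfl
      · exact absurd rfl hxy
      · exact ⟨rfl, hxy⟩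
      · exact ⟨Sym2.eq_swap, hxy.symm⟩
      · exact absurd rfl hxy
  have hlen := (Ear.isPath_of_isOpen hopen).length_eq_one_of_mem_edges he
  obtain ⟨e', he'⟩ := List.length_eq_one_iff.1 (P.walk.length_edges.trans hlen)
  rw [Ear.edges, he'] at he ⊢
  rw [List.mem_singleton.1 he]

lemma exists_isPath_to_set {u v : V} (p : G.Walk v u) (hu : u ∈ U) :
    ∃ x ∈ U, ∃ q : G.Walk v x, q.IsPath ∧ q.edges ⊆ p.edges ∧ ∀ y ∈ q.support, y ∈ U → y = x := by
  classical
  obtain ⟨x, hxU, hx, hfirst⟩ := p.bypass.exists_mem_support_forall_mem_support_imp_eq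
    {y ∈ p.bypass.support.toFinset | y ∈ U} ⟨u, by simp [hu]⟩
  refine ⟨x, (Finset.mem_filter.1 hxU).2, p.bypass.takeUntil x hx, p.bypass_isPath.takeUntil hx,
    fun e he => p.edges_bypass_subset_edges (p.bypass.edges_takeUntil_subset_edges hx he),
    fun y hy hyU => hfirst y ?_ hy⟩
  exact Finset.mem_filter.2
    ⟨List.mem_toFinset.2 (p.bypass.support_takeUntil_subset_support hx hy), hyU⟩

lemma exists_attachesTo_mem_edges {u w : V} (hu : u ∈ U) (huw : G.Adj u w)
    (hbridge : ¬ G.IsBridge s(u, w)) : ∃ P : Ear G, P.AttachesTo U ∧ s(u, w) ∈ P.edges := by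
  obtain ⟨p, hp⟩ : ∃ p : G.Walk w u, s(u, w) ∉ p.edges := by
    rw [Sym2.eq_swap] at hbridge ⊢
    simpa only [isBridge_iff_forall_walk_mem_edges, not_forall] using hbridge
  obtain ⟨x, hxU, q, hq, hqp, hqU⟩ := exists_isPath_to_set p hu
  have hattach (P : Ear G) (ha : P.a = u) (hb : P.b = x)
      (hsupp : P.walk.support = u :: q.support) : P.AttachesTo U := by
    have hxq := q.end_mem_support
    refine Ear.attachesTo_iff.2 fun v => ?_
    simp only [ha, hb, hsupp, List.mem_cons]
    grind
  by_cases hxu : x = u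
  · subst hxu
    have hcycle : (Walk.cons huw q).IsCycle :=
      (Walk.cons_isCycle_iff q huw).2 ⟨hq, fun he => hp (hqp he)⟩
    exact ⟨.ofCycle _ hcycle, hattach _ rfl rfl rfl, List.mem_cons_self⟩
  · have hpath : (Walk.cons huw q).IsPath :=
      (Walk.cons_isPath_iff huw q).2 ⟨hq, fun huq => hxu (hqU u huq hu).symm⟩
    exact ⟨.ofPath _ hpath (Ne.symm hxu), hattach _ rfl rfl rfl, List.mem_cons_self⟩

lemma exists_attachesTo_verts_of_not_adj {H : G.Subgraph} {u w : V} (hu : u ∈ H.verts)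
    (huw : G.Adj u w) (hHuw : ¬ H.Adj u w) (hbridge : ¬ G.IsBridge s(u, w)) :
    ∃ P : Ear G, P.AttachesTo H.verts ∧ s(u, w) ∈ P.edges ∧ ∀ e ∈ P.edges, e ∉ H.edgeSet := by
  obtain ⟨P, hP, huwP⟩ := exists_attachesTo_mem_edges hu huw hbridge
  refine ⟨P, hP, huwP, fun e heP heH => ?_⟩
  rw [hP.edges_eq_singleton heP fun v hv => H.mem_verts_of_mem_edge heH hv,
    List.mem_singleton] at huwP
  exact hHuw (huwP ▸ heH : s(u, w) ∈ H.edgeSet)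

lemma subgraph_eq_top_of_forall_adj (hconn : G.Preconnected) {H : G.Subgraph}
    (hH : H.verts.Nonempty) (hadj : ∀ u ∈ H.verts, ∀ w, G.Adj u w → H.Adj u w) : H = ⊤ := by
  have hverts : ∀ v, v ∈ H.verts := fun v => by
    obtain ⟨u, hu⟩ := hH
    by_contra hv
    obtain ⟨p⟩ := hconn u v
    obtain ⟨d, -, hfst, hsnd⟩ := p.exists_boundary_dart H.verts hu hv
    exact hsnd (hadj _ hfst _ d.adj).snd_mem
  exact top_le_iff.1 ⟨fun v _ => hverts v, fun u w huw => hadj u (hverts u) w huw⟩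

lemma exists_isEarSeq_verts [Finite V] (hconn : G.Preconnected)
    (hbridge : ∀ u v, G.Adj u v → ¬ G.IsBridge s(u, v)) (H : G.Subgraph) (hH : H.verts.Nonempty) :
    ∃ l : List (Ear G), IsEarSeq H.verts l ∧ (edgeList l).Nodup ∧
      ∀ e, e ∈ edgeList l ↔ e ∈ G.edgeSet ∧ e ∉ H.edgeSet := by
  induction H using WellFoundedGT.induction with
  | ind H ih =>
  by_cases hadj : ∀ u ∈ H.verts, ∀ w, G.Adj u w → H.Adj u w
  · obtain rfl := subgraph_eq_top_of_forall_adj hconn hH hadj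
    exact ⟨[], trivial, List.nodup_nil, by simp [edgeList]⟩
  · push Not at hadj
    obtain ⟨u, hu, w, huw, hHuw⟩ := hadj
    obtain ⟨P, hP, huwP, hPH⟩ :=
      exists_attachesTo_verts_of_not_adj hu huw hHuw (hbridge u w huw)
    have hedge (e : Sym2 V) :
        e ∈ (H ⊔ P.walk.toSubgraph).edgeSet ↔ e ∈ H.edgeSet ∨ e ∈ P.edges := by
      rw [Subgraph.edgeSet_sup, Set.mem_union, Walk.mem_edges_toSubgraph, Ear.edges]
    have hlt : H < H ⊔ P.walk.toSubgraph := left_lt_sup.2 fun hle =>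
      hPH _ huwP (Subgraph.edgeSet_mono hle (P.walk.mem_edges_toSubgraph.2 huwP))
    obtain ⟨l, hl, hnodup, hmem⟩ := ih _ hlt (hH.mono Set.subset_union_left)
    refine ⟨P :: l, ⟨hP, ?_⟩, ?_, fun e => ?_⟩
    · rwa [Subgraph.verts_sup, Walk.verts_toSubgraph] at hl
    · rw [edgeList_cons]
      exact P.edges_nodup.append hnodup fun e heP hel =>
        ((hmem e).1 hel).2 ((hedge e).2 (.inr heP))
    · have hPG : e ∈ P.edges → e ∈ G.edgeSet := fun he => P.walk.edges_subset_edgeSet he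
      have hPH := hPH e
      rw [edgeList_cons, List.mem_append, hmem, hedge]
      tauto

lemma TwoVertexConnected.nonempty_earDecomp (h2 : TwoVertexConnected G) :
    Nonempty (EarDecomp G) := by
  have := h2.finite
  obtain ⟨r⟩ := h2.nonempty
  obtain ⟨l, hl, hnodup, hmem⟩ := exists_isEarSeq_verts h2.preconnected
    (fun u v huv => h2.not_isBridge huv.ne) (G.singletonSubgraph r) ⟨r, rfl⟩
  exact ⟨.ofIsEarSeq hl hnodup fun e he => (hmem e).2 ⟨he, by simp⟩⟩

/-! ### Moving an open ear to the front -/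

namespace Ear

variable {Q : Ear G}

lemma isRearrangement_reverse_cons (P : Ear G) (l : List (Ear G)) :
    IsRearrangement (P.reverse :: l) (P :: l) where
  length_eq := rfl
  edges_perm := by
    rw [edgeList_cons, edgeList_cons]
    refine List.Perm.append_right _ ?_
    rw [edges, edges, reverse, Walk.edges_reverse]
    exact List.reverse_perm _
  evenCount_le := by simp [evenCount, List.countP_cons, reverse]

lemma AttachesTo.isEarSeq_swap (hP : P.AttachesTo U) (hQ : Q.AttachesTo (U ∪ P.vertices))
    (ha : Q.a ∉ P.internal) (hb : Q.b ∉ P.internal) : IsEarSeq U [Q, P] := by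
  simp only [internal, endpoints, Set.mem_sdiff, Set.mem_insert_iff, Set.mem_singleton_iff] at ha hb
  simp only [AttachesTo, IsEarSeq, endpoints, Set.ext_iff, Set.mem_inter_iff, Set.mem_union,
    Set.mem_insert_iff, Set.mem_singleton_iff] at hP hQ ⊢
  grind

lemma AttachesTo.isEarSeq_reroute (hP : P.AttachesTo U) (hQ : Q.AttachesTo (U ∪ P.vertices))
    (ha : Q.a ∈ P.internal) (hb : Q.b ∉ P.vertices) {L : G.Walk P.a Q.a} {R : G.Walk Q.a P.b}
    (hLR : P.walk = L.append R) :
    ∃ (hA : (L.append Q.walk).IsPath) (hAne : P.a ≠ Q.b) (hB : R.IsPath) (hBne : Q.a ≠ P.b),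
      IsEarSeq U [ofPath _ hA hAne, ofPath R hB hBne] := by
  have hsupp : ∀ v, v ∈ P.walk.support ↔ v ∈ L.support ∨ v ∈ R.support := fun v => by
    rw [hLR, Walk.mem_support_append_iff]
  have hcross := fun v => eq_of_mem_support_of_walk_eq_append (v := v) hLR
  obtain ⟨hLpath, hRpath⟩ := isPath_and_isPath_of_walk_eq_append ha hLR
  simp only [internal, vertices, endpoints, Set.mem_sdiff, Set.mem_ofPred_eq, Set.mem_insert_iff,
    Set.mem_singleton_iff] at ha hb
  have hQopen : Q.IsOpen := fun heq => hb (heq ▸ ha.1)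
  simp only [attachesTo_iff, vertices, Set.mem_union, Set.mem_ofPred_eq] at hP hQ
  have hA : (L.append Q.walk).IsPath :=
    isPath_append hLpath (isPath_of_isOpen hQopen) (by grind)
  refine ⟨hA, by grind [Walk.start_mem_support], hRpath, by grind, ?_⟩
  simp only [IsEarSeq, attachesTo_iff, vertices, ofPath, Set.mem_union, Set.mem_ofPred_eq,
    Walk.mem_support_append_iff]
  grind [Walk.start_mem_support, Walk.end_mem_support]

lemma AttachesTo.exists_reroute_of_walk_eq_append (hP : P.AttachesTo U)
    (hQ : Q.AttachesTo (U ∪ P.vertices)) (ha : Q.a ∈ P.internal) (hb : Q.b ∉ P.vertices)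
    {L : G.Walk P.a Q.a} {R : G.Walk Q.a P.b} (hLR : P.walk = L.append R)
    (hparity : Even R.length → Even L.length) :
    ∃ A B : Ear G, IsEarSeq U [A, B] ∧ A.a = P.a ∧ A.b = Q.b ∧ IsRearrangement [A, B] [P, Q] := by
  obtain ⟨hA, hAne, hB, hBne, hseq⟩ := hP.isEarSeq_reroute hQ ha hb hLR
  refine ⟨_, _, hseq, rfl, rfl, rfl, ?_, ?_⟩
  · simp only [edgeList, List.flatMap_cons, edges, ofPath, hLR, Walk.edges_append, List.flatMap_nil,
      List.append_nil, List.append_assoc]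
    exact List.perm_append_comm.append_left _
  · simp only [evenCount, List.countP_cons, ofPath, hLR, Walk.length_append, Nat.even_add]
    grind

lemma AttachesTo.exists_reroute (hP : P.AttachesTo U) (hQ : Q.AttachesTo (U ∪ P.vertices))
    (ha : Q.a ∈ P.internal) (hb : Q.b ∉ P.vertices) :
    ∃ A B : Ear G, IsEarSeq U [A, B] ∧ A.a ∈ P.endpoints ∧ A.b = Q.b ∧
      IsRearrangement [A, B] [P, Q] := by
  obtain ⟨L, R, hLR⟩ := Walk.mem_support_iff_exists_append.1 ha.1
  by_cases hparity : Even R.length → Even L.length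
  · obtain ⟨A, B, hseq, hAa, hAb, hrearr⟩ :=
      hP.exists_reroute_of_walk_eq_append hQ ha hb hLR hparity
    exact ⟨A, B, hseq, .inl hAa, hAb, hrearr⟩
  · have hrev : P.walk.reverse = R.reverse.append L.reverse := by rw [hLR, Walk.reverse_append]
    have hparity' : Even L.reverse.length → Even R.reverse.length := by
      rw [Walk.length_reverse, Walk.length_reverse]
      tauto
    rw [← P.vertices_reverse] at hQ hb
    rw [← P.internal_reverse] at ha
    obtain ⟨A, B, hseq, hAa, hAb, hrearr⟩ :=
      hP.reverse.exists_reroute_of_walk_eq_append hQ ha hb hrev hparity'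
    exact ⟨A, B, hseq, .inr hAa, hAb, hrearr.trans (P.isRearrangement_reverse_cons [Q])⟩

variable {α : Type*} {f : V → α}

open Classical in
/-- Extends a colouring `f` of the vertices attached so far to the internal vertices of `P`,
which all get the colour of the first vertex of `P`. -/
noncomputable def extendColoring (P : Ear G) (f : V → α) : V → α :=
  P.internal.piecewise (fun _ => f P.a) f

lemma extendColoring_of_notMem {v : V} (hv : v ∉ P.internal) : P.extendColoring f v = f v := by
  classical exact Set.piecewise_eq_of_notMem _ _ _ hv

lemma extendColoring_of_mem_vertices (hf : f P.a = f P.b) {v : V} (hv : v ∈ P.vertices) :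
    P.extendColoring f v = f P.a := by
  classical
  by_cases hint : v ∈ P.internal
  · exact Set.piecewise_eq_of_mem _ _ _ hint
  · rw [extendColoring_of_notMem hint]
    rcases not_not.1 (not_and.1 hint hv) with rfl | rfl
    exacts [rfl, hf.symm]

lemma AttachesTo.eqOn_extendColoring (hP : P.AttachesTo U) :
    Set.EqOn (P.extendColoring f) f U := fun _ hv =>
  extendColoring_of_notMem fun hint => hint.2 (hP.le ⟨hint.1, hv⟩)

lemma AttachesTo.exists_bichromatic_reroute (hP : P.AttachesTo U)
    (hQ : Q.AttachesTo (U ∪ P.vertices)) (hfP : f P.a = f P.b)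
    (hfQ : P.extendColoring f Q.a ≠ P.extendColoring f Q.b) (ha : Q.a ∈ P.internal) :
    ∃ A B : Ear G, IsEarSeq U [A, B] ∧ f A.a ≠ f A.b ∧ IsRearrangement [A, B] [P, Q] := by
  rw [extendColoring_of_mem_vertices hfP ha.1] at hfQ
  have hb : Q.b ∉ P.vertices := fun hb => hfQ (extendColoring_of_mem_vertices hfP hb).symm
  rw [extendColoring_of_notMem fun hint => hb hint.1] at hfQ
  obtain ⟨A, B, hseq, hAa, hAb, hrearr⟩ := hP.exists_reroute hQ ha hb
  have hfA : f A.a = f P.a := by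
    rcases hAa with h | h <;> rw [h]
    exact hfP.symm
  exact ⟨A, B, hseq, by rwa [hfA, hAb], hrearr⟩

lemma AttachesTo.exists_bichromatic_exchange (hP : P.AttachesTo U)
    (hQ : Q.AttachesTo (U ∪ P.vertices)) (hfP : f P.a = f P.b)
    (hfQ : P.extendColoring f Q.a ≠ P.extendColoring f Q.b) :
    ∃ A B : Ear G, IsEarSeq U [A, B] ∧ f A.a ≠ f A.b ∧ IsRearrangement [A, B] [P, Q] := by
  by_cases ha : Q.a ∈ P.internal
  · exact hP.exists_bichromatic_reroute hQ hfP hfQ ha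
  by_cases hb : Q.b ∈ P.internal
  · obtain ⟨A, B, hseq, hfA, hrearr⟩ :=
      hP.exists_bichromatic_reroute hQ.reverse hfP hfQ.symm hb
    exact ⟨A, B, hseq, hfA, hrearr.trans (.cons P (Q.isRearrangement_reverse_cons []))⟩
  · rw [extendColoring_of_notMem ha, extendColoring_of_notMem hb] at hfQ
    exact ⟨Q, P, hP.isEarSeq_swap hQ ha hb, hfQ, .swap P Q⟩

end Ear

lemma IsEarSeq.exists_bichromatic_or_exists_monochromatic {α : Type*} {f : V → α}
    (h : IsEarSeq U l) :
    (∃ A l', IsEarSeq U (A :: l') ∧ f A.a ≠ f A.b ∧ IsRearrangement (A :: l') l) ∨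
      ∃ g, Set.EqOn g f U ∧ ∀ u v, s(u, v) ∈ edgeList l → g u = g v := by
  induction l generalizing U f with
  | nil => exact .inr ⟨f, fun _ _ => rfl, fun _ _ he => absurd he List.not_mem_nil⟩
  | cons P l ih =>
    by_cases hfP : f P.a = f P.b
    swap
    · exact .inl ⟨P, l, h, hfP, .refl _⟩
    obtain ⟨hP, hl⟩ := h
    rcases ih (f := P.extendColoring f) hl with ⟨Q, l', hseq, hfQ, hrearr⟩ | ⟨g, hgf, hg⟩
    · obtain ⟨A, B, hAB, hfA, hABrearr⟩ := hP.exists_bichromatic_exchange hseq.1 hfP hfQ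
      have hPQ : IsEarSeq U ([P, Q] ++ l') := ⟨hP, hseq⟩
      exact .inl ⟨A, B :: l', hPQ.replace_prefix hAB hABrearr.edges_perm, hfA,
        (hABrearr.append (.refl l')).trans (hrearr.cons P)⟩
    · have hgP : ∀ v ∈ P.vertices, g v = f P.a := fun v hv =>
        (hgf (.inr hv)).trans (Ear.extendColoring_of_mem_vertices hfP hv)
      refine .inr ⟨g, fun v hv => (hgf (.inl hv)).trans (hP.eqOn_extendColoring hv),
        fun u v huv => ?_⟩
      rcases mem_edgeList_or_mem_vertices huv with huv | ⟨hu, hv⟩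
      · exact hg u v huv
      · rw [hgP u hu, hgP v hv]

namespace TwoVertexConnected

lemma exists_isOpen_head (h2 : TwoVertexConnected G) (hU : U.Nontrivial) (h : IsEarSeq U l)
    (hcover : ∀ u v, G.Adj u v → s(u, v) ∈ edgeList l ∨ u ∈ U ∧ v ∈ U) (hl : l ≠ []) :
    ∃ A l', IsEarSeq U (A :: l') ∧ A.IsOpen ∧ IsRearrangement (A :: l') l := by
  refine (h.exists_bichromatic_or_exists_monochromatic (f := id)).resolve_right ?_
  rintro ⟨g, hgU, hg⟩
  have hinj : Function.Injective g :=
    h2.injective_of_eqOn_id hU hgU fun u v huv => (hcover u v huv).imp_left (hg u v)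
  obtain ⟨P, l, rfl⟩ := List.exists_cons_of_ne_nil hl
  have hadj := P.walk.adj_snd P.not_nil_walk
  have hmem : s(P.a, P.walk.snd) ∈ edgeList (P :: l) :=
    mem_edgeList.2 ⟨P, List.mem_cons_self, Walk.mk_start_snd_mem_edges P.not_nil_walk⟩
  exact hadj.ne (hinj (hg _ _ hmem))

lemma exists_forall_isOpen (h2 : TwoVertexConnected G) (hU : U.Nontrivial) (h : IsEarSeq U l)
    (hcover : ∀ u v, G.Adj u v → s(u, v) ∈ edgeList l ∨ u ∈ U ∧ v ∈ U) :
    ∃ l', IsEarSeq U l' ∧ (∀ P ∈ l', P.IsOpen) ∧ IsRearrangement l' l := by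
  induction hn : l.length generalizing U l with
  | zero =>
    obtain rfl := List.length_eq_zero_iff.1 hn
    exact ⟨[], h, List.forall_mem_nil _, .refl _⟩
  | succ n ih =>
    obtain ⟨A, l', ⟨hA, hl'⟩, hAopen, hrearr⟩ :=
      h2.exists_isOpen_head hU h hcover (List.ne_nil_of_length_eq_add_one hn)
    have hcover' : ∀ u v, G.Adj u v →
        s(u, v) ∈ edgeList l' ∨ u ∈ U ∪ A.vertices ∧ v ∈ U ∪ A.vertices := fun u v huv => by
      rcases hcover u v huv with he | ⟨hu, hv⟩
      · exact (mem_edgeList_or_mem_vertices (hrearr.edges_perm.mem_iff.2 he)).imp_right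
          fun ⟨hu, hv⟩ => ⟨.inr hu, .inr hv⟩
      · exact .inr ⟨.inl hu, .inl hv⟩
    obtain ⟨l'', hseq, hopen, hrearr'⟩ := ih (hU.mono Set.subset_union_left) hl' hcover'
      (Nat.succ_injective (hrearr.length_eq.trans hn))
    exact ⟨A :: l'', ⟨hA, hseq⟩, List.forall_mem_cons.2 ⟨hAopen, hopen⟩,
      (hrearr'.cons A).trans hrearr⟩

end TwoVertexConnected

/-! ### Making the first ear long -/

namespace Ear

lemma ncard_vertices_le (hP : ¬ P.IsOpen) : P.vertices.ncard ≤ P.walk.length := by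
  classical
  cases P using path_cycle_cases with
  | path p hp hab => exact absurd hab hP
  | cycle c hc =>
    have hsub : (ofCycle c hc).vertices ⊆ c.support.tail.toFinset := fun v hv => by
      rcases c.mem_support_iff.1 hv with rfl | hv
      · exact List.mem_toFinset.2 (c.end_mem_tail_support hc.not_nil)
      · exact List.mem_toFinset.2 hv
    calc (ofCycle c hc).vertices.ncard
        ≤ c.support.tail.toFinset.card := by
          rw [← Set.ncard_coe_finset]
          exact Set.ncard_le_ncard hsub (Finset.finite_toSet _)
      _ ≤ c.support.tail.length := List.toFinset_card_le _
      _ = c.length := by rw [List.length_tail, c.length_support, Nat.add_sub_cancel]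

lemma exists_edges_eq_of_length_eq_three (hP : ¬ P.IsOpen) (hlen : P.walk.length = 3) :
    ∃ a b c, G.Adj a b ∧ G.Adj b c ∧ G.Adj c a ∧ P.edges = [s(a, b), s(b, c), s(c, a)] := by
  cases P using path_cycle_cases with
  | path p hp hab => exact absurd hab hP
  | @cycle a p hp =>
    change p.length = 3 at hlen
    match p with
    | .cons hab (.cons hbc (.cons hca .nil)) => exact ⟨_, _, _, hab, hbc, hca, rfl⟩

lemma exists_perm_edges_of_length_eq_three (hP : ¬ P.IsOpen) (hlen : P.walk.length = 3) {x y : V}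
    (hx : x ∈ P.vertices) (hy : y ∈ P.vertices) (hxy : x ≠ y) :
    ∃ z, G.Adj x y ∧ G.Adj y z ∧ G.Adj z x ∧ [s(x, y), s(y, z), s(z, x)].Perm P.edges := by
  obtain ⟨a, b, c, hab, hbc, hca, hedges⟩ := exists_edges_eq_of_length_eq_three hP hlen
  have hmem : ∀ v, v ∈ P.vertices ↔ v = a ∨ v = b ∨ v = c := fun v => by
    simp only [mem_vertices_iff_exists_mem_edges, hedges, List.mem_cons, List.not_mem_nil, or_false,
      exists_eq_or_imp, exists_eq_left, Sym2.mem_iff]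
    tauto
  have hedge : ∀ {u v}, u ∈ P.vertices → v ∈ P.vertices → u ≠ v → s(u, v) ∈ P.edges := by
    intro u v hu hv huv
    rw [hmem] at hu hv
    rcases hu with rfl | rfl | rfl <;> rcases hv with rfl | rfl | rfl <;>
      simp [hedges, Sym2.eq_swap] at huv ⊢
  obtain ⟨z, hz, hyz, hzx⟩ : ∃ z ∈ P.vertices, y ≠ z ∧ z ≠ x := by
    have := hab.ne
    have := hbc.ne
    have := hca.ne
    grind
  have hnodup : [s(x, y), s(y, z), s(z, x)].Nodup := by
    simp [hxy, hyz, hzx, hxy.symm, hzx.symm]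
  have hsub : [s(x, y), s(y, z), s(z, x)] ⊆ P.edges := by
    simp [hedge hx hy hxy, hedge hy hz hyz, hedge hz hx hzx]
  refine ⟨z, P.walk.adj_of_mem_edges (hedge hx hy hxy), P.walk.adj_of_mem_edges (hedge hy hz hyz),
    P.walk.adj_of_mem_edges (hedge hz hx hzx), (hnodup.subperm hsub).perm_of_length_le ?_⟩
  rw [hedges]
  rfl

lemma ofCycle_attachesTo_singleton {y : V} {c : G.Walk y y} (hc : c.IsCycle) :
    (ofCycle c hc).AttachesTo {y} := by
  have hy := c.start_mem_support
  refine attachesTo_iff.2 fun v => ?_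
  simp only [ofCycle, Set.mem_singleton_iff]
  grind

end Ear

lemma trivialEar_attachesTo {x y : V} (hxy : G.Adj x y) (hx : x ∈ U) (hy : y ∈ U) :
    (trivialEar G hxy).AttachesTo U := by
  refine Ear.attachesTo_iff.2 fun v => ?_
  simp only [trivialEar, Walk.support_cons, Walk.support_nil]
  grind

lemma IsEarSeq.singleton_union_vertexSet {r : V} (h : IsEarSeq {r} (P :: l)) :
    {r} ∪ vertexSet (P :: l) = vertexSet (P :: l) := by
  obtain rfl : P.a = r := (h.1.ge (.inl rfl)).2
  exact Set.union_eq_right.2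
    (Set.singleton_subset_iff.2 ⟨P, List.mem_cons_self, P.walk.start_mem_support⟩)

namespace Ear

lemma AttachesTo.exists_isLong_exchange {T Q : Ear G} (hT : ¬ T.IsOpen)
    (hlen : T.walk.length = 3) (hQ : Q.AttachesTo T.vertices) (hQopen : Q.IsOpen)
    (hdisj : T.edges.Disjoint Q.edges) :
    ∃ y C B, IsEarSeq {y} [C, B] ∧ C.IsLong ∧ B.IsOpen ∧ IsRearrangement [C, B] [T, Q] := by
  have hx : Q.a ∈ T.vertices := (hQ.ge (.inl rfl)).2
  have hy : Q.b ∈ T.vertices := (hQ.ge (.inr rfl)).2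
  obtain ⟨z, hxy, hyz, hzx, hperm⟩ := exists_perm_edges_of_length_eq_three hT hlen hx hy hQopen
  have hzT : z ∈ T.vertices :=
    mem_vertices_iff_exists_mem_edges.2 ⟨s(Q.b, z), hperm.subset (by simp), Sym2.mem_mk_right _ _⟩
  have hzQ : z ∉ Q.walk.support := fun hzQ =>
    ((attachesTo_iff.1 hQ z).1 ⟨hzQ, hzT⟩).elim hzx.ne hyz.ne'
  have hC := isCycle_cons_cons (isPath_of_isOpen hQopen) hQopen hyz hzx hzQ
  have hQlen : Q.walk.length ≠ 1 := fun hQlen => by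
    have hsnd : Q.walk.snd = Q.b := by rw [Walk.snd, ← hQlen, Walk.getVert_length]
    exact hdisj (hperm.subset List.mem_cons_self)
      (hsnd ▸ Walk.mk_start_snd_mem_edges Q.not_nil_walk)
  refine ⟨Q.b, ofCycle _ hC, trivialEar G hxy, ⟨ofCycle_attachesTo_singleton hC,
    trivialEar_attachesTo hxy (.inr ?_) (.inl rfl), trivial⟩, ?_, hxy.ne, rfl, ?_, ?_⟩
  · simp [vertices, ofCycle]
  · have := Q.length_pos
    simp only [IsLong, ofCycle, Walk.length_cons]
    lia
  · calc edgeList [ofCycle _ hC, trivialEar G hxy]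
        = [s(Q.b, z), s(z, Q.a)] ++ Q.edges ++ [s(Q.a, Q.b)] := rfl
      _ |>.Perm ([s(Q.a, Q.b), s(Q.b, z), s(z, Q.a)] ++ Q.edges) := List.perm_append_singleton _ _
      _ |>.Perm (edgeList [T, Q]) := by
        simpa [edgeList] using hperm.append_right Q.edges
  · have hparity : Even (Q.walk.length + 1 + 1) ↔ Even Q.walk.length := by grind
    simp [evenCount, ofCycle, trivialEar, hlen, hparity, List.countP_cons]

end Ear

lemma IsEarSeq.exists_isLong_of_length_eq_three {r : V} {T Q : Ear G}
    (h : IsEarSeq {r} (T :: Q :: l)) (hlen : T.walk.length = 3) (hQopen : Q.IsOpen)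
    (hnodup : (edgeList (T :: Q :: l)).Nodup) :
    ∃ y C B, IsEarSeq {y} (C :: B :: l) ∧ C.IsLong ∧ B.IsOpen ∧
      IsRearrangement (C :: B :: l) (T :: Q :: l) := by
  have hTQ : IsEarSeq {r} ([T, Q] ++ l) := h
  have hT : {r} ∪ T.vertices = T.vertices := by
    simpa [vertexSet_cons, vertexSet_nil] using
      (show IsEarSeq {r} [T] from ⟨h.1, trivial⟩).singleton_union_vertexSet
  have hQ : Q.AttachesTo T.vertices := hT ▸ h.2.1
  have hdisj : T.edges.Disjoint Q.edges := by
    rw [edgeList_cons, edgeList_cons] at hnodup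
    exact (List.disjoint_append_right.1 (List.disjoint_of_nodup_append hnodup)).1
  obtain ⟨y, C, B, hseq, hlong, hB, hrearr⟩ :=
    hQ.exists_isLong_exchange h.not_isOpen_head hlen hQopen hdisj
  refine ⟨y, C, B, isEarSeq_append.2 ⟨hseq, ?_⟩, hlong, hB, hrearr.append (.refl l)⟩
  rw [isEarSeq_append] at hTQ
  rw [hseq.singleton_union_vertexSet, vertexSet_eq_of_perm hrearr.edges_perm,
    ← hTQ.1.singleton_union_vertexSet]
  exact hTQ.2

lemma TwoVertexConnected.natCard_le_length (h2 : TwoVertexConnected G) (hP : ¬ P.IsOpen)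
    (hcover : ∀ e ∈ G.edgeSet, e ∈ P.edges) : Nat.card V ≤ P.walk.length := by
  have huniv : P.vertices = Set.univ := Set.eq_univ_of_forall fun v => by
    obtain ⟨w, hvw⟩ := h2.exists_adj v
    exact P.walk.fst_mem_support_of_mem_edges (hcover _ hvw)
  rw [← Set.ncard_univ, ← huniv]
  exact Ear.ncard_vertices_le hP

lemma TwoVertexConnected.exists_isLong_head (h2 : TwoVertexConnected G) (h4 : 4 ≤ Nat.card V)
    {r : V} (h : IsEarSeq {r} (P :: l)) (hopen : ∀ Q ∈ l, Q.IsOpen)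
    (hnodup : (edgeList (P :: l)).Nodup)
    (hcover : ∀ e ∈ G.edgeSet, e ∈ edgeList (P :: l)) :
    ∃ y C l', IsEarSeq {y} (C :: l') ∧ C.IsLong ∧ (∀ Q ∈ l', Q.IsOpen) ∧
      IsRearrangement (C :: l') (P :: l) := by
  by_cases hlong : P.IsLong
  · exact ⟨r, P, l, h, hlong, hopen, .refl _⟩
  have hlen : P.walk.length = 3 :=
    le_antisymm (by rw [Ear.IsLong] at hlong; lia) (Ear.three_le_length h.not_isOpen_head)
  cases l with
  | nil =>
    have hcard := h2.natCard_le_length h.not_isOpen_head (by simpa [edgeList] using hcover)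
    lia
  | cons Q l =>
    rw [List.forall_mem_cons] at hopen
    obtain ⟨y, C, B, hseq, hC, hB, hrearr⟩ :=
      h.exists_isLong_of_length_eq_three hlen hopen.1 hnodup
    exact ⟨y, C, B :: l, hseq, hC, List.forall_mem_cons.2 ⟨hB, hopen.2⟩, hrearr⟩

lemma TwoVertexConnected.exists_isLong_head_forall_isOpen (h2 : TwoVertexConnected G)
    (h4 : 4 ≤ Nat.card V) {r : V} (h : IsEarSeq {r} l) (hnodup : (edgeList l).Nodup)
    (hcover : ∀ e ∈ G.edgeSet, e ∈ edgeList l) :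
    ∃ y C l', IsEarSeq {y} (C :: l') ∧ C.IsLong ∧ (∀ Q ∈ l', Q.IsOpen) ∧
      IsRearrangement (C :: l') l := by
  obtain ⟨w, hw⟩ := h2.exists_adj r
  obtain ⟨P, hP, -⟩ := mem_edgeList.1 (hcover s(r, w) hw)
  obtain ⟨P, l, rfl⟩ := List.exists_cons_of_ne_nil (List.ne_nil_of_mem hP)
  obtain ⟨l', hseq, hopen, hrearr⟩ :=
    h2.exists_forall_isOpen (P.nontrivial_vertices.mono Set.subset_union_right) h.2
      fun u v huv => (mem_edgeList_or_mem_vertices (hcover s(u, v) huv)).imp_right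
        fun ⟨hu, hv⟩ => ⟨.inr hu, .inr hv⟩
  replace hrearr := hrearr.cons P
  obtain ⟨y, C, l'', hseq', hlong, hopen', hrearr'⟩ :=
    h2.exists_isLong_head h4 ⟨h.1, hseq⟩ hopen (hrearr.edges_perm.nodup_iff.2 hnodup)
      fun e he => hrearr.edges_perm.mem_iff.2 (hcover e he)
  exact ⟨y, C, l'', hseq', hlong, hopen', hrearr'.trans hrearr⟩

lemma EarDecomp.exists_isOpen_isLong (D : EarDecomp G) (h2 : TwoVertexConnected G)
    (h4 : 4 ≤ Nat.card V) :
    ∃ D' : EarDecomp G, D'.IsOpen ∧ D'.evenEars ≤ D.evenEars ∧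
      ∃ h : 0 < D'.ears.length, (D'.ears.get ⟨0, h⟩).IsLong := by
  obtain ⟨y, C, l, hseq, hlong, hopen, hrearr⟩ := h2.exists_isLong_head_forall_isOpen h4
    D.isEarSeq_s2 D.edgeList_ears_nodup fun _ he => D.mem_edgeList_ears he
  refine ⟨.ofIsEarSeq hseq (hrearr.edges_perm.nodup_iff.2 D.edgeList_ears_nodup)
    fun e he => hrearr.edges_perm.mem_iff.2 (D.mem_edgeList_ears he), ?_, hrearr.evenCount_le,
    Nat.zero_lt_succ _, hlong⟩
  rintro ⟨_ | i, hi⟩ hpos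
  · exact absurd hpos (by simp)
  · exact hopen _ (List.get_mem l ⟨i, Nat.lt_of_succ_lt_succ hi⟩)

theorem statement_2_general (G : SimpleGraph V) (h2 : TwoVertexConnected G)
    (h4 : 4 ≤ Nat.card V) :
    ∃ D : EarDecomp G, D.IsOpen ∧ D.evenEars = phi G ∧
      ∃ h : 0 < D.ears.length, (D.ears.get ⟨0, h⟩).IsLong := by
  obtain ⟨D₀⟩ := h2.nonempty_earDecomp
  obtain ⟨D, hD⟩ : phi G ∈ {n | ∃ D : EarDecomp G, D.evenEars = n} := Nat.sInf_mem ⟨_, D₀, rfl⟩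
  obtain ⟨D', hopen, hle, hlong⟩ := D.exists_isOpen_isLong h2 h4
  exact ⟨D', hopen, le_antisymm (hle.trans_eq hD) (Nat.sInf_le ⟨D', rfl⟩), hlong⟩

/-- Every 2-vertex-connected simple graph of minimum degree at least `3`
has an open ear-decomposition with exactly `φ(G)` even ears whose first ear is long. -/
theorem statement_2 {V : Type*} [Fintype V] [DecidableEq V] (G : SimpleGraph V)
    [DecidableRel G.Adj]
    (h2 : TwoVertexConnected G) (hdeg : ∀ v : V, 3 ≤ G.degree v) :
    ∃ D : EarDecomp G, D.IsOpen ∧ D.evenEars = phi G ∧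
      ∃ h : 0 < D.ears.length, (D.ears.get ⟨0, h⟩).IsLong := by
  obtain ⟨v⟩ := h2.nonempty
  refine statement_2_general G h2 (Nat.card_eq_fintype_card (α := V) ▸ ?_)
  exact (hdeg v).trans_lt (G.degree_lt_card_verts v)
end
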